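/- arXiv:1705.09947 — 11 statements merged into one kernel-verified Lean document; each statement's English description precedes it below -/
import Mathlib

section
/- Let $X_u, X_s$ be Banach spaces and let $X = X_u \times X_s$ be equipped with the norm $\|(x_u,x_s)\| = \max\{\|x_u\|,\|x_s\|\}$. Let $L_u : X_u \to X_u$ be a bounded linear bijection with bounded inverse satisfying $\|L_u^{-1}\| \le a^{-1}$, let $L_s : X_s \to X_s$ be a bounded linear operator with $\|L_s\| \le b$, where $0 < b < \rho < a$, and let $\gamma > 0$ satisfy $b + 2\gamma < \rho < a - 2\gamma$. Let $N : X \to X$ be Lipschitz continuous with Lipschitz constant at most $\gamma$ and $N(0)=0$, and set $S = L + N$ where $L(x_u,x_s) = (L_u x_u, L_s x_s)$. Then there exists a map $\theta : X_u \to X_s$ with $\theta(0) = 0$ and Lipschitz constant at most $\gamma/(a-b-3\gamma) < 1$, such that the set $W^u = \{(\xi, \theta(\xi)) : \xi \in X_u\}$ satisfies $S(W^u) = W^u$, and $\|S(x) - S(z)\| \ge (a-2\gamma)\|x - z\|$ for all $x, z \in W^u$; in particular $S$ restricted to $W^u$ is a bijection of $W^u$ onto itself whose inverse is Lipschitz with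 constant at most $(a-2\gamma)^{-1} < \rho^{-1}$. -/
/-- Global unstable manifold theorem: existence of the Lipschitz graph `W^u`. -/
theorem stmt0
    {Xu Xs : Type*} [NormedAddCommGroup Xu] [NormedSpace ℝ Xu] [CompleteSpace Xu]
    [NormedAddCommGroup Xs] [NormedSpace ℝ Xs] [CompleteSpace Xs]
    (a b ρ γ : ℝ) (hb : 0 < b) (hbρ : b < ρ) (hρa : ρ < a) (hγ : 0 < γ)
    (h1 : b + 2 * γ < ρ) (h2 : ρ < a - 2 * γ)
    (Lu : Xu ≃L[ℝ] Xu) (hLu : ‖(Lu.symm : Xu →L[ℝ] Xu)‖ ≤ a⁻¹)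
    (Ls : Xs →L[ℝ] Xs) (hLs : ‖Ls‖ ≤ b)
    (N : Xu × Xs → Xu × Xs) (hN0 : N 0 = 0)
    (hNLip : ∀ x y : Xu × Xs, ‖N x - N y‖ ≤ γ * ‖x - y‖)
    (S : Xu × Xs → Xu × Xs)
    (hS : ∀ x : Xu × Xs, S x = (Lu x.1, Ls x.2) + N x) :
    ∃ θ : Xu → Xs, θ 0 = 0 ∧
      (∀ ξ₁ ξ₂ : Xu, ‖θ ξ₁ - θ ξ₂‖ ≤ γ / (a - b - 3 * γ) * ‖ξ₁ - ξ₂‖) ∧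
      γ / (a - b - 3 * γ) < 1 ∧
      S '' {p : Xu × Xs | p.2 = θ p.1} = {p : Xu × Xs | p.2 = θ p.1} ∧
      (∀ x ∈ {p : Xu × Xs | p.2 = θ p.1}, ∀ z ∈ {p : Xu × Xs | p.2 = θ p.1},
        (a - 2 * γ) * ‖x - z‖ ≤ ‖S x - S z‖) ∧
      Set.BijOn S {p : Xu × Xs | p.2 = θ p.1} {p : Xu × Xs | p.2 = θ p.1} ∧
      (a - 2 * γ)⁻¹ < ρ⁻¹ := by
  have ha : 0 < a := by linarith
  set κ : ℝ := γ / (a - b - 3 * γ) with hκ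
  have hden : 0 < a - b - 3 * γ := by linarith
  have hκ0 : 0 < κ := div_pos hγ hden
  have hκ1 : κ < 1 := by rw [hκ, div_lt_one hden]; linarith
  have hκe : κ * (a - b - 3 * γ) = γ := div_mul_cancel₀ _ hden.ne'
  have hsymm : ∀ v : Xu, a * ‖Lu.symm v‖ ≤ ‖v‖ := by
    intro v
    have h := (Lu.symm : Xu →L[ℝ] Xu).le_of_opNorm_le hLu v
    have h' : ‖Lu.symm v‖ ≤ a⁻¹ * ‖v‖ := h
    calc a * ‖Lu.symm v‖ ≤ a * (a⁻¹ * ‖v‖) := by gcongr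
      _ = ‖v‖ := by field_simp
  have hexp : ∀ v : Xu, a * ‖v‖ ≤ ‖Lu v‖ := by
    intro v
    simpa using hsymm (Lu v)
  have hu : ∀ p q : Xu × Xs, a * ‖p.1 - q.1‖ - γ * ‖p - q‖ ≤ ‖(S p).1 - (S q).1‖ := by
    intro p q
    have e : (S p).1 - (S q).1 = Lu (p.1 - q.1) + (N p - N q).1 := by
      simp [hS]; abel
    have h3 : ‖(N p - N q).1‖ ≤ γ * ‖p - q‖ := (norm_fst_le _).trans (hNLip p q)
    have h4 := norm_sub_le_norm_add (Lu (p.1 - q.1)) (N p - N q).1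
    rw [e]
    linarith [hexp (p.1 - q.1)]
  have hs : ∀ p q : Xu × Xs, ‖(S p).2 - (S q).2‖ ≤ b * ‖p.2 - q.2‖ + γ * ‖p - q‖ := by
    intro p q
    have e : (S p).2 - (S q).2 = Ls (p.2 - q.2) + (N p - N q).2 := by
      simp [hS]; abel
    have h3 : ‖(N p - N q).2‖ ≤ γ * ‖p - q‖ := (norm_snd_le _).trans (hNLip p q)
    have h4 := norm_add_le (Ls (p.2 - q.2)) (N p - N q).2
    have h5 := Ls.le_of_opNorm_le hLs (p.2 - q.2)
    rw [e]
    linarith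
  have hS0 : S 0 = 0 := by rw [hS, hN0]; simp
  have hNc : Continuous N := by
    have : LipschitzWith ⟨γ, hγ.le⟩ N := LipschitzWith.of_dist_le_mul (fun x y => by
      rw [dist_eq_norm, dist_eq_norm]; exact hNLip x y)
    exact this.continuous
  have hSc : Continuous S := by
    have : S = fun x => (Lu x.1, Ls x.2) + N x := funext hS
    rw [this]
    fun_prop
  let K : Set (Xu → Xs) := {θ | θ 0 = 0 ∧ ∀ x y, ‖θ x - θ y‖ ≤ κ * ‖x - y‖}
  have hKle : ∀ θ ∈ K, ∀ x y, ‖θ x - θ y‖ ≤ ‖x - y‖ := by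
    intro θ hθ x y
    have := hθ.2 x y
    nlinarith [norm_nonneg (x - y)]
  have hgr : ∀ θ ∈ K, ∀ x y : Xu, ‖((x, θ x) : Xu × Xs) - (y, θ y)‖ = ‖x - y‖ := by
    intro θ hθ x y
    rw [Prod.mk_sub_mk, Prod.norm_mk]
    exact max_eq_left (hKle θ hθ x y)
  have hexpG : ∀ θ ∈ K, ∀ x y : Xu,
      (a - γ) * ‖x - y‖ ≤ ‖(S (x, θ x)).1 - (S (y, θ y)).1‖ := by
    intro θ hθ x y
    have h := hu (x, θ x) (y, θ y)
    rw [hgr θ hθ] at h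
    simp only at h
    linarith
  have hexpG0 : ∀ θ ∈ K, ∀ x : Xu, (a - γ) * ‖x‖ ≤ ‖(S (x, θ x)).1‖ := by
    intro θ hθ x
    have h := hexpG θ hθ x 0
    rw [hθ.1] at h
    have e : S ((0 : Xu), (0 : Xs)) = 0 := hS0
    rw [e] at h
    simpa using h
  have hsurj : ∀ θ ∈ K, ∀ ξ : Xu, ∃ x : Xu, (S (x, θ x)).1 = ξ := by
    intro θ hθ ξ
    let F : Xu → Xu := fun x => Lu.symm (ξ - (N (x, θ x)).1)
    have hF : LipschitzWith ⟨γ / a, by positivity⟩ F := by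
      refine LipschitzWith.of_dist_le_mul (fun x y => ?_)
      rw [dist_eq_norm, dist_eq_norm]
      change ‖Lu.symm _ - Lu.symm _‖ ≤ γ / a * ‖x - y‖
      rw [← map_sub]
      have e : ξ - (N (x, θ x)).1 - (ξ - (N (y, θ y)).1)
          = (N (y, θ y) - N (x, θ x)).1 := by simp
      rw [e]
      have h3 := hsymm (N (y, θ y) - N (x, θ x)).1
      have h4 := (norm_fst_le _).trans (hNLip (y, θ y) (x, θ x))
      rw [hgr θ hθ, norm_sub_rev y x] at h4
      rw [div_mul_eq_mul_div, le_div_iff₀ ha]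
      linarith
    have hC : ContractingWith ⟨γ / a, by positivity⟩ F := by
      refine ⟨?_, hF⟩
      apply NNReal.coe_lt_coe.1
      change γ / a < 1
      rw [div_lt_one ha]; linarith
    refine ⟨ContractingWith.fixedPoint F hC, ?_⟩
    have hfix : F _ = _ := hC.fixedPoint_isFixedPt
    set x := ContractingWith.fixedPoint F hC
    have : Lu (F x) = Lu x := by rw [hfix]
    simp only [F, ContinuousLinearEquiv.apply_symm_apply] at this
    simp [hS, ← this]
  have hT : ∀ θ : K, ∃ θ' : K, ∀ x, θ'.1 (S (x, θ.1 x)).1 = (S (x, θ.1 x)).2 := by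
    rintro ⟨θ, hθ⟩
    choose h hh using hsurj θ hθ
    have hinv : ∀ x, h (S (x, θ x)).1 = x := by
      intro x
      have h3 := hexpG θ hθ (h (S (x, θ x)).1) x
      rw [hh] at h3
      simp only [sub_self, norm_zero] at h3
      have h4 : ‖h (S (x, θ x)).1 - x‖ ≤ 0 := by
        by_contra hcon
        push Not at hcon
        nlinarith
      exact sub_eq_zero.1 (norm_le_zero_iff.1 h4)
    refine ⟨⟨fun ξ => (S (h ξ, θ (h ξ))).2, ?_, ?_⟩, ?_⟩
    · have h3 := hinv 0
      have e : S ((0 : Xu), θ 0) = 0 := by rw [hθ.1]; exact hS0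
      rw [e] at h3
      simp only [Prod.fst_zero] at h3
      simp only [h3, e, Prod.snd_zero]
    · intro x y
      have h3 := hexpG θ hθ (h x) (h y)
      rw [hh, hh] at h3
      have h4 := hs (h x, θ (h x)) (h y, θ (h y))
      rw [hgr θ hθ] at h4
      simp only at h4 ⊢
      have h5 := hθ.2 (h x) (h y)
      have h6 : b * ‖θ (h x) - θ (h y)‖ ≤ b * (κ * ‖h x - h y‖) := by gcongr
      have h7 : κ * ((a - γ) * ‖h x - h y‖) ≤ κ * ‖x - y‖ := by gcongr
      have h8 : b * κ + γ ≤ κ * (a - γ) := by nlinarith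
      have h9 := mul_le_mul_of_nonneg_right h8 (norm_nonneg (h x - h y))
      nlinarith
    · intro x
      simp only [hinv]
  choose T hT using hT
  set r : ℝ := (b + γ) * a / (a - γ) ^ 2 with hr
  have hag : 0 < a - γ := by linarith
  have hr0 : 0 ≤ r := by positivity
  have hr1 : r < 1 := by
    rw [hr, div_lt_one (by positivity)]
    nlinarith
  have hcon : ∀ θ₁ θ₂ : K, ∀ d : ℝ, 0 ≤ d → (∀ x, ‖θ₁.1 x - θ₂.1 x‖ ≤ d * ‖x‖) →
      ∀ x, ‖(T θ₁).1 x - (T θ₂).1 x‖ ≤ (d * r) * ‖x‖ := by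
    intro θ₁ θ₂ d hd hdist ξ
    obtain ⟨x, hx⟩ := hsurj θ₁.1 θ₁.2 ξ
    obtain ⟨y, hy⟩ := hsurj θ₂.1 θ₂.2 ξ
    have e1 := hT θ₁ x
    have e2 := hT θ₂ y
    rw [hx] at e1
    rw [hy] at e2
    rw [e1, e2]
    have h3 := hu (x, θ₁.1 x) (y, θ₂.1 y)
    have h4 := hs (x, θ₁.1 x) (y, θ₂.1 y)
    have h5 := hexpG0 θ₁.1 θ₁.2 x
    rw [hx] at h5
    rw [hx, hy, sub_self, norm_zero] at h3
    have hD : ‖θ₁.1 x - θ₂.1 y‖ ≤ d * ‖x‖ + ‖x - y‖ := by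
      have := norm_sub_le_norm_sub_add_norm_sub (θ₁.1 x) (θ₂.1 x) (θ₂.1 y)
      linarith [hdist x, hKle θ₂.1 θ₂.2 x y]
    have hP : ‖((x, θ₁.1 x) : Xu × Xs) - (y, θ₂.1 y)‖ ≤ d * ‖x‖ + ‖x - y‖ := by
      rw [Prod.mk_sub_mk, Prod.norm_mk]
      refine max_le ?_ hD
      have : 0 ≤ d * ‖x‖ := by positivity
      linarith
    simp only at h3 h4
    have h6 : (a - γ) * ‖x - y‖ ≤ γ * (d * ‖x‖) := by nlinarith
    have h7 : (a - γ) * (d * ‖x‖ + ‖x - y‖) ≤ a * (d * ‖x‖) := by linarith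
    have h8 : ‖(S (x, θ₁.1 x)).2 - (S (y, θ₂.1 y)).2‖ ≤ (b + γ) * (d * ‖x‖ + ‖x - y‖) := by
      nlinarith
    have h9 : d * ((a - γ) * ‖x‖) ≤ d * ‖ξ‖ := by gcongr
    have h10 : (a - γ) ^ 2 * (d * ‖x‖ + ‖x - y‖) ≤ a * (d * ‖ξ‖) := by
      calc (a - γ) ^ 2 * (d * ‖x‖ + ‖x - y‖)
          = (a - γ) * ((a - γ) * (d * ‖x‖ + ‖x - y‖)) := by ring
        _ ≤ (a - γ) * (a * (d * ‖x‖)) := by gcongr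
        _ = a * (d * ((a - γ) * ‖x‖)) := by ring
        _ ≤ _ := by gcongr
    refine h8.trans ?_
    have e : d * r * ‖ξ‖ = ((b + γ) * (a * (d * ‖ξ‖))) / (a - γ) ^ 2 := by
      rw [hr]; ring
    rw [e, le_div_iff₀ (by positivity)]
    calc (b + γ) * (d * ‖x‖ + ‖x - y‖) * (a - γ) ^ 2
        = (b + γ) * ((a - γ) ^ 2 * (d * ‖x‖ + ‖x - y‖)) := by ring
      _ ≤ _ := by gcongr
  let z : K := ⟨fun _ => 0, rfl, fun x y => by simp; positivity⟩
  let t : ℕ → K := fun n => T^[n] z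
  have ht : ∀ n, t (n + 1) = T (t n) := fun n => Function.iterate_succ_apply' T n z
  have htd : ∀ n x, ‖(t n).1 x - (t (n + 1)).1 x‖ ≤ (2 * r ^ n) * ‖x‖ := by
    intro n
    induction n with
    | zero =>
      intro x
      have h3 := hKle _ (t 0).2 x 0
      have h4 := hKle _ (t 1).2 x 0
      rw [(t 0).2.1, sub_zero, sub_zero] at h3
      rw [(t 1).2.1, sub_zero, sub_zero] at h4
      have := norm_sub_le ((t 0).1 x) ((t 1).1 x)
      simp only [zero_add, pow_zero]
      linarith
    | succ n ih =>
      intro x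
      rw [ht (n + 1)]
      have := hcon (t n) (t (n + 1)) _ (by positivity) ih x
      rw [← ht n] at this
      rw [pow_succ]
      linarith
  have hlim : ∀ x, ∃ l, Filter.Tendsto (fun n => (t n).1 x) Filter.atTop (nhds l) := by
    intro x
    refine cauchySeq_tendsto_of_complete (cauchySeq_of_le_geometric r (2 * ‖x‖) hr1 ?_)
    intro n
    rw [dist_eq_norm]
    linarith [htd n x]
  choose θ hθl using hlim
  have hθK : θ ∈ K := by
    constructor
    · refine tendsto_nhds_unique (hθl 0) ?_
      have : (fun n => (t n).1 0) = fun _ => 0 := funext fun n => (t n).2.1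
      rw [this]
      exact tendsto_const_nhds
    · intro x y
      exact le_of_tendsto ((hθl x).sub (hθl y)).norm
        (Filter.Eventually.of_forall fun n => (t n).2.2 x y)
  have hinvθ : ∀ x, θ (S (x, θ x)).1 = (S (x, θ x)).2 := by
    intro x
    have hp : Filter.Tendsto (fun n => S (x, (t n).1 x)) Filter.atTop (nhds (S (x, θ x))) :=
      (hSc.tendsto _).comp (tendsto_const_nhds.prodMk_nhds (hθl x))
    have hp1 := (continuous_fst.tendsto _).comp hp
    have hp2 := (continuous_snd.tendsto _).comp hp
    have hq := (hθl (S (x, θ x)).1).comp (Filter.tendsto_add_atTop_nat 1)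
    refine tendsto_nhds_unique hq ?_
    have hz : Filter.Tendsto (fun n => (t (n + 1)).1 (S (x, θ x)).1
        - (t (n + 1)).1 (S (x, (t n).1 x)).1) Filter.atTop (nhds 0) := by
      refine squeeze_zero_norm (fun n => hKle _ (t (n + 1)).2 _ _) ?_
      have := (tendsto_const_nhds (x := (S (x, θ x)).1)).sub hp1
      rw [sub_self] at this
      simpa using this.norm
    have := hz.add hp2
    rw [zero_add] at this
    refine this.congr (fun n => ?_)
    have e := hT (t n) x
    rw [← ht n] at e
    simp only [Function.comp]
    rw [← e]
    abel
  have himg : S '' {p : Xu × Xs | p.2 = θ p.1} = {p : Xu × Xs | p.2 = θ p.1} := by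
    ext p
    constructor
    · rintro ⟨⟨x, y⟩, hxy, rfl⟩
      change y = θ x at hxy
      subst hxy
      exact (hinvθ x).symm
    · intro hp
      change p.2 = θ p.1 at hp
      obtain ⟨x, hx⟩ := hsurj θ hθK p.1
      refine ⟨(x, θ x), rfl, Prod.ext hx ?_⟩
      rw [hp, ← hinvθ x, hx]
  have hexpW : ∀ x ∈ {p : Xu × Xs | p.2 = θ p.1}, ∀ z ∈ {p : Xu × Xs | p.2 = θ p.1},
        (a - 2 * γ) * ‖x - z‖ ≤ ‖S x - S z‖ := by
    rintro ⟨x, x'⟩ hx ⟨y, y'⟩ hy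
    change x' = θ x at hx
    change y' = θ y at hy
    subst hx hy
    rw [hgr θ hθK]
    have h3 := hexpG θ hθK x y
    have h4 := norm_fst_le (S (x, θ x) - S (y, θ y))
    rw [Prod.fst_sub] at h4
    nlinarith [norm_nonneg (x - y)]
  refine ⟨θ, hθK.1, hθK.2, hκ1, himg, hexpW, ⟨?_, ?_, ?_⟩, ?_⟩
  · intro p hp
    rw [← himg]
    exact ⟨p, hp, rfl⟩
  · intro p hp q hq hpq
    have h3 := hexpW p hp q hq
    rw [hpq, sub_self, norm_zero] at h3
    have h4 : ‖p - q‖ ≤ 0 := by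
      by_contra hc
      push Not at hc
      nlinarith
    exact sub_eq_zero.1 (norm_le_zero_iff.1 h4)
  · exact himg.ge
  · exact inv_strictAnti₀ (by linarith) h2
end

section
/- Let $X_u, X_s$ be Banach spaces and let $X = X_u \times X_s$ be equipped with the norm $\|(x_u,x_s)\| = \max\{\|x_u\|,\|x_s\|\}$. Let $L_u : X_u \to X_u$ be a bounded linear bijection with bounded inverse satisfying $\|L_u^{-1}\| \le a^{-1}$, let $L_s : X_s \to X_s$ be a bounded linear operator with $\|L_s\| \le b$, where $0 < b < \rho < a$, and let $\gamma > 0$ satisfy $b + 2\gamma < \rho < a - 2\gamma$. Let $N : X \to X$ be Lipschitz continuous with Lipschitz constant at most $\gamma$ and $N(0)=0$, and set $S = L + N$ where $L(x_u,x_s) = (L_u x_u, L_s x_s)$. Then there exists a map $\sigma : X_s \to X_u$ with $\sigma(0) = 0$ and Lipschitz constant strictly less than $1$, such that the set $W^s = \{(\sigma(\eta), \eta) : \eta \in X_s\}$ satisfies $S(W^s) \subseteq W^s$ and $\|S(x) - S(z)\| \le (b+2\gamma)\|x - z\|$ for all $x, z \in W^s$; in particular the restriction of $S$ to $W^s$ is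 Lipschitz with constant at most $b + 2\gamma < \rho$. -/
/-- Global stable manifold theorem: existence of the Lipschitz graph `W^s`. -/
theorem stmt1
    {Xu Xs : Type*} [NormedAddCommGroup Xu] [NormedSpace ℝ Xu] [CompleteSpace Xu]
    [NormedAddCommGroup Xs] [NormedSpace ℝ Xs] [CompleteSpace Xs]
    (a b ρ γ : ℝ) (hb : 0 < b) (hbρ : b < ρ) (hρa : ρ < a) (hγ : 0 < γ)
    (h1 : b + 2 * γ < ρ) (h2 : ρ < a - 2 * γ)
    (Lu : Xu ≃L[ℝ] Xu) (hLu : ‖(Lu.symm : Xu →L[ℝ] Xu)‖ ≤ a⁻¹)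
    (Ls : Xs →L[ℝ] Xs) (hLs : ‖Ls‖ ≤ b)
    (N : Xu × Xs → Xu × Xs) (hN0 : N 0 = 0)
    (hNLip : ∀ x y : Xu × Xs, ‖N x - N y‖ ≤ γ * ‖x - y‖)
    (S : Xu × Xs → Xu × Xs)
    (hS : ∀ x : Xu × Xs, S x = (Lu x.1, Ls x.2) + N x) :
    ∃ σ : Xs → Xu, σ 0 = 0 ∧
      (∃ cσ : ℝ, 0 ≤ cσ ∧ cσ < 1 ∧
        ∀ η₁ η₂ : Xs, ‖σ η₁ - σ η₂‖ ≤ cσ * ‖η₁ - η₂‖) ∧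
      S '' {p : Xu × Xs | p.1 = σ p.2} ⊆ {p : Xu × Xs | p.1 = σ p.2} ∧
      (∀ x ∈ {p : Xu × Xs | p.1 = σ p.2}, ∀ z ∈ {p : Xu × Xs | p.1 = σ p.2},
        ‖S x - S z‖ ≤ (b + 2 * γ) * ‖x - z‖) ∧
      b + 2 * γ < ρ := by
  have ha : 0 < a := by linarith
  have hsym : ∀ v : Xu, ‖Lu.symm v‖ ≤ ‖v‖ / a := by
    intro v
    have h := (Lu.symm : Xu →L[ℝ] Xu).le_of_opNorm_le hLu v
    rw [div_eq_inv_mul]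
    exact h
  have hLsb : ∀ v : Xs, ‖Ls v‖ ≤ b * ‖v‖ := fun v => Ls.le_of_opNorm_le hLs v
  have hN1 : ∀ x y : Xu × Xs, ‖(N x).1 - (N y).1‖ ≤ γ * ‖x - y‖ := fun x y =>
    (norm_fst_le (N x - N y)).trans (hNLip x y)
  have hN2 : ∀ x y : Xu × Xs, ‖(N x).2 - (N y).2‖ ≤ γ * ‖x - y‖ := fun x y =>
    (norm_snd_le (N x - N y)).trans (hNLip x y)
  obtain ⟨c, hc⟩ : ∃ c, c = (b + 2 * γ) / a := ⟨_, rfl⟩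
  have hc0 : 0 ≤ c := by rw [hc]; positivity
  have hc1 : c < 1 := by rw [hc, div_lt_one ha]; linarith
  have hca : c * a = b + 2 * γ := by rw [hc]; field_simp
  obtain ⟨k, hk⟩ : ∃ k, k = (b + 3 * γ) / a := ⟨_, rfl⟩
  have hk0 : 0 ≤ k := by rw [hk]; positivity
  have hk1 : k < 1 := by rw [hk, div_lt_one ha]; linarith
  have hka : k * a = b + 3 * γ := by rw [hk]; field_simp
  -- graph points
  have hpt : ∀ σ : Xs → Xu, (∀ x y, ‖σ x - σ y‖ ≤ c * ‖x - y‖) → ∀ x y : Xs,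
      ‖((σ x, x) : Xu × Xs) - (σ y, y)‖ ≤ ‖x - y‖ := by
    intro σ h x y
    rw [Prod.mk_sub_mk, Prod.norm_mk]
    refine max_le ((h x y).trans ?_) le_rfl
    nlinarith [norm_nonneg (x - y)]
  let g : (Xs → Xu) → Xs → Xs := fun σ η => Ls η + (N (σ η, η)).2
  have hg : ∀ σ : Xs → Xu, (∀ x y, ‖σ x - σ y‖ ≤ c * ‖x - y‖) → ∀ x y : Xs,
      ‖g σ x - g σ y‖ ≤ (b + γ) * ‖x - y‖ := by
    intro σ h x y
    have e : g σ x - g σ y = Ls (x - y) + ((N (σ x, x)).2 - (N (σ y, y)).2) := by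
      simp only [g, map_sub]; abel
    rw [e]
    have := norm_add_le (Ls (x - y)) ((N (σ x, x)).2 - (N (σ y, y)).2)
    have h3 := hN2 (σ x, x) (σ y, y)
    have h4 := mul_le_mul_of_nonneg_left (hpt σ h x y) hγ.le
    have h5 := hLsb (x - y)
    linarith
  let T : (Xs → Xu) → Xs → Xu := fun σ η => Lu.symm (σ (g σ η) - (N (σ η, η)).1)
  have hTlip : ∀ σ : Xs → Xu, (∀ x y, ‖σ x - σ y‖ ≤ c * ‖x - y‖) → ∀ x y : Xs,
      ‖T σ x - T σ y‖ ≤ c * ‖x - y‖ := by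
    intro σ h x y
    simp only [T]
    rw [← map_sub]
    refine (hsym _).trans ?_
    rw [div_le_iff₀ ha]
    have e : σ (g σ x) - (N (σ x, x)).1 - (σ (g σ y) - (N (σ y, y)).1)
      = (σ (g σ x) - σ (g σ y)) - ((N (σ x, x)).1 - (N (σ y, y)).1) := by abel
    rw [e]
    have h0 := norm_sub_le (σ (g σ x) - σ (g σ y)) ((N (σ x, x)).1 - (N (σ y, y)).1)
    have h3 := hN1 (σ x, x) (σ y, y)
    have h4 := mul_le_mul_of_nonneg_left (hpt σ h x y) hγ.le
    have h5 := h (g σ x) (g σ y)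
    have h6 := hg σ h x y
    have h7 : c * ‖g σ x - g σ y‖ ≤ ‖g σ x - g σ y‖ := by
      nlinarith [norm_nonneg (g σ x - g σ y)]
    have h8 : c * ‖x - y‖ * a = (b + 2 * γ) * ‖x - y‖ := by rw [← hca]; ring
    linarith
  have hT0 : ∀ σ : Xs → Xu, σ 0 = 0 → T σ 0 = 0 := by
    intro σ h
    have h00 : N ((0 : Xu), (0 : Xs)) = 0 := hN0
    simp [T, g, h, h00]
  have hdp : ∀ (u v : Xu) (x : Xs), ‖((u, x) : Xu × Xs) - (v, x)‖ = ‖u - v‖ := by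
    intro u v x
    rw [Prod.mk_sub_mk, Prod.norm_mk, sub_self, norm_zero]
    exact max_eq_left (norm_nonneg _)
  have hTc : ∀ σ τ : Xs → Xu, (∀ x y, ‖σ x - σ y‖ ≤ c * ‖x - y‖) →
      (∀ x y, ‖τ x - τ y‖ ≤ c * ‖x - y‖) → σ 0 = 0 → τ 0 = 0 → ∀ d : ℝ, 0 ≤ d →
      (∀ x, ‖σ x - τ x‖ ≤ d * ‖x‖) → ∀ x, ‖T σ x - T τ x‖ ≤ k * d * ‖x‖ := by
    intro σ τ h h' z z' d hd hdd x
    simp only [T]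
    rw [← map_sub]
    refine (hsym _).trans ?_
    rw [div_le_iff₀ ha]
    have e : σ (g σ x) - (N (σ x, x)).1 - (τ (g τ x) - (N (τ x, x)).1)
      = (σ (g σ x) - τ (g σ x)) + (τ (g σ x) - τ (g τ x))
        - ((N (σ x, x)).1 - (N (τ x, x)).1) := by abel
    rw [e]
    have h0 := norm_sub_le ((σ (g σ x) - τ (g σ x)) + (τ (g σ x) - τ (g τ x)))
      ((N (σ x, x)).1 - (N (τ x, x)).1)
    have h0' := norm_add_le (σ (g σ x) - τ (g σ x)) (τ (g σ x) - τ (g τ x))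
    have h3 := hN1 (σ x, x) (τ x, x)
    rw [hdp] at h3
    have h4 := hN2 (σ x, x) (τ x, x)
    rw [hdp] at h4
    have h5 := mul_le_mul_of_nonneg_left (hdd x) hγ.le
    have h6 := hdd (g σ x)
    have g0 : g σ 0 = 0 := by
      have h00 : N ((0 : Xu), (0 : Xs)) = 0 := hN0
      simp [g, z, h00]
    have h7 := hg σ h x 0
    rw [g0, sub_zero, sub_zero] at h7
    have h8 := mul_le_mul_of_nonneg_left h7 hd
    have h9 := h' (g σ x) (g τ x)
    have e2 : g σ x - g τ x = (N (σ x, x)).2 - (N (τ x, x)).2 := by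
      simp only [g]; abel
    have h10 : c * ‖g σ x - g τ x‖ ≤ ‖g σ x - g τ x‖ := by
      nlinarith [norm_nonneg (g σ x - g τ x)]
    rw [e2] at h9 h10
    have h11 : k * d * ‖x‖ * a = (b + 3 * γ) * (d * ‖x‖) := by rw [← hka]; ring
    linarith
  -- iteration
  let s : ℕ → Xs → Xu := fun n => T^[n] (fun _ => 0)
  have hs1 : ∀ n, s (n + 1) = T (s n) := fun n => Function.iterate_succ_apply' T n _
  have hsl : ∀ n x y, ‖s n x - s n y‖ ≤ c * ‖x - y‖ := by
    intro n
    induction n with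
    | zero => intro x y; simp only [s, Function.iterate_zero, id, sub_self, norm_zero]; positivity
    | succ n ih => rw [hs1]; exact hTlip _ ih
  have hsz : ∀ n, s n 0 = 0 := by
    intro n
    induction n with
    | zero => rfl
    | succ n ih => rw [hs1]; exact hT0 _ ih
  have hsc : ∀ n x, ‖s (n + 1) x - s n x‖ ≤ k ^ n * ‖x‖ := by
    intro n
    induction n with
    | zero =>
      intro x
      have h := hsl 1 x 0
      rw [hsz, sub_zero, sub_zero] at h
      have e : s 0 x = 0 := rfl
      rw [e, sub_zero, pow_zero, one_mul, zero_add]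
      nlinarith [norm_nonneg x]
    | succ n ih =>
      intro x
      rw [hs1 (n + 1)]
      have h := hTc (s (n + 1)) (s n) (hsl _) (hsl _) (hsz _) (hsz _) (k ^ n) (by positivity) ih x
      rw [← hs1 n] at h
      rw [pow_succ']
      exact h
  have hlim : ∀ x, ∃ l, Filter.Tendsto (fun n => s n x) Filter.atTop (nhds l) := by
    intro x
    refine cauchySeq_tendsto_of_complete (cauchySeq_of_le_geometric k ‖x‖ hk1 fun n => ?_)
    rw [dist_comm, dist_eq_norm, mul_comm]
    exact hsc n x
  choose σ hσ using hlim
  have hσl : ∀ x y, ‖σ x - σ y‖ ≤ c * ‖x - y‖ := fun x y =>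
    le_of_tendsto ((hσ x).sub (hσ y)).norm (Filter.Eventually.of_forall fun n => hsl n x y)
  have hσ0 : σ 0 = 0 := by
    refine tendsto_nhds_unique (hσ 0) ?_
    simp only [hsz]
    exact tendsto_const_nhds
  have hNc : Continuous N := by
    refine (LipschitzWith.of_dist_le_mul (K := ⟨γ, hγ.le⟩) fun x y => ?_).continuous
    rw [dist_eq_norm, dist_eq_norm]
    exact hNLip x y
  have hNt : ∀ x, Filter.Tendsto (fun n => N (s n x, x)) Filter.atTop (nhds (N (σ x, x))) :=
    fun x => (hNc.tendsto _).comp ((hσ x).prodMk_nhds tendsto_const_nhds)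
  have hgt : ∀ x, Filter.Tendsto (fun n => g (s n) x) Filter.atTop (nhds (g σ x)) := fun x =>
    tendsto_const_nhds.add ((continuous_snd.tendsto _).comp (hNt x))
  have hst : ∀ x, Filter.Tendsto (fun n => s n (g (s n) x)) Filter.atTop (nhds (σ (g σ x))) := by
    intro x
    have h1 : Filter.Tendsto (fun n => s n (g (s n) x) - s n (g σ x)) Filter.atTop (nhds 0) := by
      refine squeeze_zero_norm (fun n => hsl n _ _) ?_
      have := (((hgt x).sub_const (g σ x)).norm).const_mul c
      simpa using this
    simpa using h1.add (hσ (g σ x))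
  have hfix : ∀ x, σ x = T σ x := by
    intro x
    refine tendsto_nhds_unique ((hσ x).comp (Filter.tendsto_add_atTop_nat 1)) ?_
    have : (fun n => s n x) ∘ (fun n => n + 1) = fun n => T (s n) x := by
      funext n; simp only [Function.comp, hs1]
    rw [this]
    exact (Lu.symm.continuous.tendsto _).comp
      ((hst x).sub ((continuous_fst.tendsto _).comp (hNt x)))
  have hS2 : ∀ x, (S (σ x, x)).2 = g σ x := fun x => by rw [hS]; rfl
  have hS1 : ∀ x, (S (σ x, x)).1 = σ (g σ x) := by
    intro x
    have h : Lu (σ x) = σ (g σ x) - (N (σ x, x)).1 := by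
      conv_lhs => rw [hfix x]
      exact Lu.apply_symm_apply _
    rw [hS]
    simp [h]
  refine ⟨σ, hσ0, ⟨c, hc0, hc1, hσl⟩, ?_, ?_, h1⟩
  · rintro _ ⟨⟨u, x⟩, hp, rfl⟩
    simp only [Set.mem_setOf_eq] at hp ⊢
    subst hp
    rw [hS2, hS1]
  · rintro ⟨u, x⟩ hx ⟨v, z⟩ hz
    simp only [Set.mem_setOf_eq] at hx hz
    subst hx hz
    have e : ∀ x, S (σ x, x) = (σ (g σ x), g σ x) := fun x => Prod.ext (hS1 x) (hS2 x)
    rw [e, e]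
    refine (hpt σ hσl _ _).trans ((hg σ hσl x z).trans ?_)
    have h3 : ‖x - z‖ ≤ ‖((σ x, x) : Xu × Xs) - (σ z, z)‖ :=
      norm_snd_le (((σ x, x) : Xu × Xs) - (σ z, z))
    gcongr
    linarith
end

section
/- Let $X_u, X_s$ be Banach spaces and let $X = X_u \times X_s$ be equipped with the norm $\|(x_u,x_s)\| = \max\{\|x_u\|,\|x_s\|\}$. Let $L_u : X_u \to X_u$ be a bounded linear bijection with bounded inverse satisfying $\|L_u^{-1}\| \le a^{-1}$, let $L_s : X_s \to X_s$ be a bounded linear operator with $\|L_s\| \le b$, where $0 < b < \rho < a$, and let $\gamma > 0$ satisfy $b + 2\gamma < \rho < a - 2\gamma$. Let $N : X \to X$ be Lipschitz continuous with Lipschitz constant at most $\gamma$ and $N(0)=0$, set $S = L + N$ where $L(x_u,x_s) = (L_u x_u, L_s x_s)$, and let $\theta : X_u \to X_s$ be a map with $\theta(0)=0$ and Lipschitz constant at most $1$ whose graph $W^u = \{(\xi,\theta(\xi)) : \xi \in X_u\}$ satisfies $S(W^u) = W^u$. Then a point $x \in X$ belongs to $W^u$ if and only if there exists a sequence $(x_j)_{j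 \le 0}$ in $X$ with $x_0 = x$, $S(x_j) = x_{j+1}$ for all $j < 0$, and $\sup_{j \le 0} \rho^{-j}\|x_j\| < \infty$. -/
/-- Characterization of the global unstable manifold by backward orbits with
`‖x_j‖ = O(ρ^j)` as `j → -∞` (here indexed by `x_{-n} = u n`). -/
theorem stmt2
    {Xu Xs : Type*} [NormedAddCommGroup Xu] [NormedSpace ℝ Xu] [CompleteSpace Xu]
    [NormedAddCommGroup Xs] [NormedSpace ℝ Xs] [CompleteSpace Xs]
    (a b ρ γ : ℝ) (hb : 0 < b) (hbρ : b < ρ) (hρa : ρ < a) (hγ : 0 < γ)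
    (h1 : b + 2 * γ < ρ) (h2 : ρ < a - 2 * γ)
    (Lu : Xu ≃L[ℝ] Xu) (hLu : ‖(Lu.symm : Xu →L[ℝ] Xu)‖ ≤ a⁻¹)
    (Ls : Xs →L[ℝ] Xs) (hLs : ‖Ls‖ ≤ b)
    (N : Xu × Xs → Xu × Xs) (hN0 : N 0 = 0)
    (hNLip : ∀ x y : Xu × Xs, ‖N x - N y‖ ≤ γ * ‖x - y‖)
    (S : Xu × Xs → Xu × Xs)
    (hS : ∀ x : Xu × Xs, S x = (Lu x.1, Ls x.2) + N x)
    (θ : Xu → Xs) (hθ0 : θ 0 = 0)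
    (hθLip : ∀ ξ₁ ξ₂ : Xu, ‖θ ξ₁ - θ ξ₂‖ ≤ ‖ξ₁ - ξ₂‖)
    (hInv : S '' {p : Xu × Xs | p.2 = θ p.1} = {p : Xu × Xs | p.2 = θ p.1}) :
    ∀ x : Xu × Xs, x ∈ {p : Xu × Xs | p.2 = θ p.1} ↔
      ∃ u : ℕ → Xu × Xs, u 0 = x ∧ (∀ n : ℕ, S (u (n + 1)) = u n) ∧
        ∃ C : ℝ, ∀ n : ℕ, ρ ^ n * ‖u n‖ ≤ C := by
  have ha : 0 < a := by linarith
  have hρ : 0 < ρ := by linarith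
  have hexp : ∀ v : Xu, a * ‖v‖ ≤ ‖Lu v‖ := by
    intro v
    have h := (Lu.symm : Xu →L[ℝ] Xu).le_opNorm (Lu v)
    simp only [ContinuousLinearEquiv.coe_coe, ContinuousLinearEquiv.symm_apply_apply] at h
    have h' : ‖v‖ ≤ a⁻¹ * ‖Lu v‖ :=
      h.trans (mul_le_mul_of_nonneg_right hLu (norm_nonneg _))
    calc a * ‖v‖ ≤ a * (a⁻¹ * ‖Lu v‖) := mul_le_mul_of_nonneg_left h' ha.le
      _ = ‖Lu v‖ := by field_simp
  have hθn : ∀ ξ, ‖θ ξ‖ ≤ ‖ξ‖ := by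
    intro ξ
    simpa [hθ0] using hθLip ξ 0
  intro x
  constructor
  · intro hx
    have hpre : ∀ p : {p : Xu × Xs // p.2 = θ p.1}, ∃ q : {p : Xu × Xs // p.2 = θ p.1},
        S q.1 = p.1 := by
      rintro ⟨p, hp⟩
      have h : p ∈ S '' {p : Xu × Xs | p.2 = θ p.1} := by rw [hInv]; exact hp
      obtain ⟨q, hq, hqp⟩ := h
      exact ⟨⟨q, hq⟩, hqp⟩
    choose g hg using hpre
    have hgrow : ∀ p : Xu × Xs, p.2 = θ p.1 → ρ * ‖p‖ ≤ ‖S p‖ := by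
      intro p hp
      have hn : ‖p‖ = ‖p.1‖ := by
        rw [Prod.norm_def, hp]
        exact max_eq_left (hθn _)
      have e1 : (S p).1 = Lu p.1 + (N p).1 := by rw [hS]; rfl
      have e2 : ‖(S p).1‖ ≤ ‖S p‖ := norm_fst_le _
      have e3 : ‖(N p).1‖ ≤ ‖N p‖ := norm_fst_le _
      have e4 : ‖N p‖ ≤ γ * ‖p‖ := by simpa [hN0] using hNLip p 0
      have e5 : ‖Lu p.1‖ ≤ ‖(S p).1‖ + ‖(N p).1‖ := by
        have : Lu p.1 = (S p).1 - (N p).1 := by rw [e1]; abel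
        rw [this]; exact norm_sub_le _ _
      have e6 := hexp p.1
      rw [← hn] at e6
      nlinarith [norm_nonneg p]
    refine ⟨fun n => (g^[n] ⟨x, hx⟩).1, rfl, ?_, ‖x‖, ?_⟩
    · intro n
      simp only [Function.iterate_succ_apply']
      exact hg _
    · intro n
      induction n with
      | zero => simp
      | succ n ih =>
        refine le_trans ?_ ih
        have h := hgrow _ (g^[n+1] ⟨x, hx⟩).2
        have h3 : S (g^[n+1] ⟨x, hx⟩).1 = (g^[n] ⟨x, hx⟩).1 := by
          rw [Function.iterate_succ_apply']; exact hg _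
        rw [h3] at h
        calc _ = ρ ^ n * (ρ * ‖(g^[n+1] ⟨x, hx⟩).1‖) := by ring
          _ ≤ _ := mul_le_mul_of_nonneg_left h (pow_nonneg hρ.le n)
  · rintro ⟨u, hu0, hu, C, hC⟩
    have hstep : ∀ p : Xu × Xs,
        ‖(S p).2 - θ (S p).1‖ ≤ (b + 2 * γ) * ‖p.2 - θ p.1‖ := by
      intro p
      obtain ⟨q, hq⟩ : ∃ q : Xu × Xs, q = (p.1, θ p.1) := ⟨_, rfl⟩
      have hSq : (S q).2 = θ (S q).1 := by
        have : S q ∈ S '' {p : Xu × Xs | p.2 = θ p.1} := ⟨q, by simp [hq], rfl⟩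
        rw [hInv] at this
        exact this
      have hpq : ‖p - q‖ = ‖p.2 - θ p.1‖ := by
        simp [hq, Prod.norm_def]
      have hNpq := hNLip p q
      rw [hpq] at hNpq
      have e1 : (S p).1 - (S q).1 = (N p - N q).1 := by
        simp [hS, hq]
      have e2 : (S p).2 - (S q).2 = Ls (p.2 - θ p.1) + (N p - N q).2 := by
        simp [hS, hq]; abel
      have e3 : (S p).2 - θ (S p).1
          = Ls (p.2 - θ p.1) + (N p - N q).2 + (θ (S q).1 - θ (S p).1) := by
        rw [← e2, hSq]; abel
      have e4 : ‖θ (S q).1 - θ (S p).1‖ ≤ ‖N p - N q‖ := by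
        rw [norm_sub_rev]
        refine (hθLip _ _).trans ?_
        rw [e1]; exact norm_fst_le _
      have e5 : ‖Ls (p.2 - θ p.1)‖ ≤ b * ‖p.2 - θ p.1‖ := Ls.le_of_opNorm_le hLs _
      have e6 : ‖(N p - N q).2‖ ≤ ‖N p - N q‖ := norm_snd_le _
      rw [e3]
      refine (norm_add₃_le).trans ?_
      linarith
    have hc : 0 < b + 2 * γ := by linarith
    have hiter : ∀ n, ‖x.2 - θ x.1‖ ≤ (b + 2 * γ) ^ n * ‖(u n).2 - θ (u n).1‖ := by
      intro n
      induction n with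
      | zero => simp [hu0]
      | succ n ih =>
        refine ih.trans ?_
        have h := hstep (u (n+1))
        rw [hu n] at h
        rw [pow_succ, mul_assoc]
        exact mul_le_mul_of_nonneg_left h (pow_nonneg hc.le n)
    have hd : ∀ p : Xu × Xs, ‖p.2 - θ p.1‖ ≤ 2 * ‖p‖ := by
      intro p
      have := norm_sub_le p.2 (θ p.1)
      have := hθn p.1
      have := norm_fst_le p
      have := norm_snd_le p
      linarith
    have hbound : ∀ n : ℕ, ‖x.2 - θ x.1‖ ≤ ((b + 2 * γ) / ρ) ^ n * (2 * C) := by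
      intro n
      have hp : 0 < ρ ^ n := pow_pos hρ n
      calc _ ≤ (b + 2 * γ) ^ n * (2 * ‖u n‖) :=
            (hiter n).trans (mul_le_mul_of_nonneg_left (hd _) (pow_nonneg hc.le n))
        _ = ((b + 2 * γ) / ρ) ^ n * (2 * (ρ ^ n * ‖u n‖)) := by
            rw [div_pow]; field_simp
        _ ≤ _ := mul_le_mul_of_nonneg_left (by linarith [hC n])
            (pow_nonneg (div_pos hc hρ).le n)
    have hlim : Filter.Tendsto (fun n : ℕ => ((b + 2 * γ) / ρ) ^ n * (2 * C))
        Filter.atTop (nhds 0) := by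
      have := (tendsto_pow_atTop_nhds_zero_of_lt_one (div_pos hc hρ).le
        ((div_lt_one hρ).2 h1)).mul_const (2 * C)
      simpa using this
    have hz : ‖x.2 - θ x.1‖ ≤ 0 := ge_of_tendsto' hlim hbound
    exact sub_eq_zero.1 (norm_le_zero_iff.1 hz)
end

section
/- Let $X_u, X_s$ be Banach spaces and let $X = X_u \times X_s$ be equipped with the norm $\|(x_u,x_s)\| = \max\{\|x_u\|,\|x_s\|\}$. Let $L_u : X_u \to X_u$ be a bounded linear bijection with bounded inverse satisfying $\|L_u^{-1}\| \le a^{-1}$, let $L_s : X_s \to X_s$ be a bounded linear operator with $\|L_s\| \le b$, where $0 < b < \rho < a$, and let $\gamma > 0$ satisfy $b + 2\gamma < \rho < a - 2\gamma$. Let $N : X \to X$ be Lipschitz continuous with Lipschitz constant at most $\gamma$ and $N(0)=0$, set $S = L + N$ where $L(x_u,x_s) = (L_u x_u, L_s x_s)$, and let $\sigma : X_s \to X_u$ be a map with $\sigma(0)=0$ and Lipschitz constant at most $1$ whose graph $W^s = \{(\sigma(\eta),\eta) : \eta \in X_s\}$ satisfies $S(W^s) \subseteq W^s$. Then a point $x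 \in X$ belongs to $W^s$ if and only if $\rho^{-n}\|S^n(x)\| \to 0$ as $n \to \infty$. -/
/-- Characterization of the global stable manifold: `x ∈ W^s` iff
`ρ⁻ⁿ ‖Sⁿ x‖ → 0` as `n → ∞`. -/
theorem stmt3
    {Xu Xs : Type*} [NormedAddCommGroup Xu] [NormedSpace ℝ Xu] [CompleteSpace Xu]
    [NormedAddCommGroup Xs] [NormedSpace ℝ Xs] [CompleteSpace Xs]
    (a b ρ γ : ℝ) (hb : 0 < b) (hbρ : b < ρ) (hρa : ρ < a) (hγ : 0 < γ)
    (h1 : b + 2 * γ < ρ) (h2 : ρ < a - 2 * γ)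
    (Lu : Xu ≃L[ℝ] Xu) (hLu : ‖(Lu.symm : Xu →L[ℝ] Xu)‖ ≤ a⁻¹)
    (Ls : Xs →L[ℝ] Xs) (hLs : ‖Ls‖ ≤ b)
    (N : Xu × Xs → Xu × Xs) (hN0 : N 0 = 0)
    (hNLip : ∀ x y : Xu × Xs, ‖N x - N y‖ ≤ γ * ‖x - y‖)
    (S : Xu × Xs → Xu × Xs)
    (hS : ∀ x : Xu × Xs, S x = (Lu x.1, Ls x.2) + N x)
    (σ : Xs → Xu) (hσ0 : σ 0 = 0)
    (hσLip : ∀ η₁ η₂ : Xs, ‖σ η₁ - σ η₂‖ ≤ ‖η₁ - η₂‖)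
    (hInv : S '' {p : Xu × Xs | p.1 = σ p.2} ⊆ {p : Xu × Xs | p.1 = σ p.2}) :
    ∀ x : Xu × Xs, x ∈ {p : Xu × Xs | p.1 = σ p.2} ↔
      Filter.Tendsto (fun n : ℕ => (ρ ^ n)⁻¹ * ‖S^[n] x‖)
        Filter.atTop (nhds 0) := by
  have hρ : 0 < ρ := hb.trans hbρ
  have ha : 0 < a := hρ.trans hρa
  have hNn : ∀ x, ‖N x‖ ≤ γ * ‖x‖ := fun x => by simpa [hN0] using hNLip x 0
  have hσn : ∀ η, ‖σ η‖ ≤ ‖η‖ := fun η => by simpa [hσ0] using hσLip η 0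
  have hI : ∀ x : Xu × Xs, x.1 = σ x.2 → (S x).1 = σ (S x).2 := fun x hx =>
    hInv ⟨x, hx, rfl⟩
  have hLun : ∀ u : Xu, a * ‖u‖ ≤ ‖Lu u‖ := by
    intro u
    have h := (Lu.symm : Xu →L[ℝ] Xu).le_of_opNorm_le hLu (Lu u)
    simp only [ContinuousLinearEquiv.coe_coe, ContinuousLinearEquiv.symm_apply_apply] at h
    calc a * ‖u‖ ≤ a * (a⁻¹ * ‖Lu u‖) := by gcongr
      _ = ‖Lu u‖ := by field_simp
  intro x
  constructor
  · intro hx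
    have key : ∀ n : ℕ, (S^[n] x).1 = σ (S^[n] x).2 ∧ ‖S^[n] x‖ ≤ (b + γ) ^ n * ‖x‖ := by
      intro n
      induction n with
      | zero => exact ⟨hx, by simp⟩
      | succ n ih =>
        rw [Function.iterate_succ_apply']
        obtain ⟨i1, i2⟩ := ih
        generalize S^[n] x = y at i1 i2
        have hw := hI y i1
        refine ⟨hw, ?_⟩
        have e1 : ‖S y‖ ≤ ‖(S y).2‖ := by
          rw [Prod.norm_def, hw]
          exact max_le (hσn _) le_rfl
        have e2 : ‖(S y).2‖ ≤ (b + γ) * ‖y‖ := by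
          have : (S y).2 = Ls y.2 + (N y).2 := by rw [hS]; rfl
          rw [this]
          have f1 := Ls.le_of_opNorm_le hLs y.2
          have f2 : b * ‖y.2‖ ≤ b * ‖y‖ := by gcongr; exact norm_snd_le y
          have f3 := (norm_snd_le (N y)).trans (hNn y)
          have f4 := norm_add_le (Ls y.2) (N y).2
          linarith
        calc ‖S y‖ ≤ (b + γ) * ‖y‖ := e1.trans e2
          _ ≤ (b + γ) * ((b + γ) ^ n * ‖x‖) := by gcongr
          _ = _ := by ring
    have ht : Filter.Tendsto (fun n : ℕ => ((b + γ) / ρ) ^ n * ‖x‖) Filter.atTop (nhds 0) := by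
      have := (tendsto_pow_atTop_nhds_zero_of_lt_one (r := (b + γ) / ρ) (by positivity)
        (by rw [div_lt_one hρ]; linarith)).mul_const ‖x‖
      simpa using this
    refine squeeze_zero (fun n => by positivity) (fun n => ?_) ht
    calc (ρ ^ n)⁻¹ * ‖S^[n] x‖ ≤ (ρ ^ n)⁻¹ * ((b + γ) ^ n * ‖x‖) := by
          gcongr; exact (key n).2
      _ = _ := by rw [div_pow]; ring
  · intro ht
    have step : ∀ y : Xu × Xs, ρ * ‖y.1 - σ y.2‖ ≤ ‖(S y).1 - σ (S y).2‖ := by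
      intro y
      set z : Xu × Xs := (σ y.2, y.2) with hz
      have hw := hI z rfl
      have hd : ‖y - z‖ = ‖y.1 - σ y.2‖ := by
        rw [Prod.norm_def]; simp [hz]
      have g0 := hNLip y z
      rw [hd] at g0
      have g1 := (norm_fst_le (N y - N z)).trans g0
      have g2 := (norm_snd_le (N y - N z)).trans g0
      have g3 := hσLip (S z).2 (S y).2
      have e2 : (S z).2 - (S y).2 = -(N y - N z).2 := by
        simp [hS, hz]
      rw [e2, norm_neg] at g3
      have e1 : Lu (y.1 - σ y.2) = ((S y).1 - σ (S y).2) - (N y - N z).1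
          - (σ (S z).2 - σ (S y).2) := by
        rw [← hw]
        simp only [hS, hz, map_sub, Prod.fst_add, Prod.fst_sub]
        abel
      have g4 := hLun (y.1 - σ y.2)
      rw [e1] at g4
      have g5 := norm_sub_le (((S y).1 - σ (S y).2) - (N y - N z).1) (σ (S z).2 - σ (S y).2)
      have g6 := norm_sub_le ((S y).1 - σ (S y).2) (N y - N z).1
      have g7 : ρ * ‖y.1 - σ y.2‖ ≤ (a - 2 * γ) * ‖y.1 - σ y.2‖ := by gcongr
      linarith
    have key : ∀ n : ℕ, ρ ^ n * ‖x.1 - σ x.2‖ ≤ ‖(S^[n] x).1 - σ (S^[n] x).2‖ := by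
      intro n
      induction n with
      | zero => simp
      | succ n ih =>
        rw [Function.iterate_succ_apply']
        refine le_trans ?_ (step _)
        rw [pow_succ', mul_assoc]
        gcongr
    have bd : ∀ n : ℕ, ‖x.1 - σ x.2‖ ≤ 2 * ((ρ ^ n)⁻¹ * ‖S^[n] x‖) := by
      intro n
      have k := key n
      have k1 := norm_sub_le (S^[n] x).1 (σ (S^[n] x).2)
      have k2 := hσn (S^[n] x).2
      have k3 := norm_fst_le (S^[n] x)
      have k4 := norm_snd_le (S^[n] x)
      have k5 : ρ ^ n * ‖x.1 - σ x.2‖ ≤ 2 * ‖S^[n] x‖ := by linarith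
      calc ‖x.1 - σ x.2‖ = (ρ ^ n)⁻¹ * (ρ ^ n * ‖x.1 - σ x.2‖) := by field_simp
        _ ≤ (ρ ^ n)⁻¹ * (2 * ‖S^[n] x‖) := by gcongr
        _ = _ := by ring
    have h0 : ‖x.1 - σ x.2‖ ≤ 0 := by
      have := ge_of_tendsto' (ht.const_mul 2) bd
      simpa using this
    exact sub_eq_zero.mp (norm_le_zero_iff.mp h0)
end

section
/- Let $X_u, X_s$ be Banach spaces and let $X = X_u \times X_s$ be equipped with the norm $\|(x_u,x_s)\| = \max\{\|x_u\|,\|x_s\|\}$. Let $R > 0$ and let $B$ denote the closed ball of radius $R$ centered at $0$ in $X$. Let $a > 1$, $0 \le b < 1$, and let $S : X \to X$ be a map such that for every $x = (x_u, x_s) \in B$ one has $\|\pi_u S(x)\| \ge a \|x_u\|$ and $\|\pi_s S(x)\| \le b \|x_s\|$, where $\pi_u, \pi_s$ denote the projections onto $X_u$ and $X_s$. Then every global solution of $S$ contained in $B$, i.e. every function $\xi : \mathbb{Z} \to B$ with $S(\xi(m)) = \xi(m+1)$ for all $m \in \mathbb{Z}$, satisfies $\xi(m) = 0$ for all $m \in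 \mathbb{Z}$. -/
/-- Any global solution of `S` that stays in the closed ball of radius `R`,
where `S` expands the unstable component and contracts the stable one,
must be identically zero. -/
theorem stmt5 {Xu Xs : Type*} [NormedAddCommGroup Xu] [NormedAddCommGroup Xs]
    (R a b : ℝ) (hR : 0 < R) (ha : 1 < a) (hb0 : 0 ≤ b) (hb : b < 1)
    (S : Xu × Xs → Xu × Xs)
    (hu : ∀ x : Xu × Xs, ‖x‖ ≤ R → a * ‖x.1‖ ≤ ‖(S x).1‖)
    (hs : ∀ x : Xu × Xs, ‖x‖ ≤ R → ‖(S x).2‖ ≤ b * ‖x.2‖)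
    (ξ : ℤ → Xu × Xs) (hξB : ∀ m : ℤ, ‖ξ m‖ ≤ R)
    (hξ : ∀ m : ℤ, S (ξ m) = ξ (m + 1)) :
    ∀ m : ℤ, ξ m = 0 := by
  have h1 : ∀ (n : ℕ) (m : ℤ), a ^ n * ‖(ξ m).1‖ ≤ R := by
    intro n
    induction n with
    | zero =>
      intro m
      simpa using (norm_fst_le (ξ m)).trans (hξB m)
    | succ k ih =>
      intro m
      have h := hu (ξ m) (hξB m)
      rw [hξ] at h
      have hk : 0 ≤ a ^ k := by positivity
      calc a ^ (k + 1) * ‖(ξ m).1‖ = a ^ k * (a * ‖(ξ m).1‖) := by ring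
        _ ≤ a ^ k * ‖(ξ (m + 1)).1‖ := mul_le_mul_of_nonneg_left h hk
        _ ≤ R := ih (m + 1)
  have h2 : ∀ (n : ℕ) (m : ℤ), ‖(ξ m).2‖ ≤ b ^ n * R := by
    intro n
    induction n with
    | zero =>
      intro m
      simpa using (norm_snd_le (ξ m)).trans (hξB m)
    | succ k ih =>
      intro m
      have h := hs (ξ (m - 1)) (hξB (m - 1))
      rw [hξ, sub_add_cancel] at h
      calc ‖(ξ m).2‖ ≤ b * ‖(ξ (m - 1)).2‖ := h
        _ ≤ b * (b ^ k * R) := mul_le_mul_of_nonneg_left (ih (m - 1)) hb0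
        _ = b ^ (k + 1) * R := by ring
  intro m
  have e1 : (ξ m).1 = 0 := by
    by_contra hne
    have hpos : 0 < ‖(ξ m).1‖ := norm_pos_iff.mpr hne
    obtain ⟨n, hn⟩ := pow_unbounded_of_one_lt (R / ‖(ξ m).1‖) ha
    rw [div_lt_iff₀ hpos] at hn
    exact absurd (h1 n m) (not_le.mpr hn)
  have e2 : (ξ m).2 = 0 := by
    by_contra hne
    have hpos : 0 < ‖(ξ m).2‖ := norm_pos_iff.mpr hne
    obtain ⟨n, hn⟩ := exists_pow_lt_of_lt_one (div_pos hpos hR) hb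
    rw [lt_div_iff₀ hR] at hn
    exact absurd (h2 n m) (not_le.mpr hn)
  exact Prod.ext e1 e2
end

section
/- Let $X$ be a Banach space and $T : X \to X$ a continuous map which is asymptotically compact, i.e. whenever $n_k \to \infty$ in $\mathbb{N}$ and $(x_k)$ is a bounded sequence in $X$ such that $(T^{n_k}(x_k))$ is bounded, the sequence $(T^{n_k}(x_k))$ has a convergent subsequence. Let $x^* \in X$ be a fixed point of $T$ and let $\delta > 0$ be such that the only global solution $\xi : \mathbb{Z} \to X$ of $T$ with $\xi(m) \in B_\delta(x^*)$ for all $m \in \mathbb{Z}$ is the constant solution $\xi \equiv x^*$. Then every global solution $\xi : \mathbb{Z} \to X$ of $T$ satisfying $\xi(m) \in B_{\delta/2}(x^*)$ for all $m \ge 0$ converges to $x^*$, i.e. $\|\xi(m) - x^*\| \to 0$ as $m \to \infty$. -/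
/-- Near an isolated fixed point of an asymptotically compact map, every
global solution remaining in the half-sized ball for nonnegative times
converges to the fixed point. -/
theorem stmt6 {X : Type*} [NormedAddCommGroup X] [NormedSpace ℝ X]
    (T : X → X) (hT : Continuous T)
    (hac : ∀ (n : ℕ → ℕ) (x : ℕ → X),
      Filter.Tendsto n Filter.atTop Filter.atTop →
      (∃ C : ℝ, ∀ k, ‖x k‖ ≤ C) → (∃ C : ℝ, ∀ k, ‖T^[n k] (x k)‖ ≤ C) →
      ∃ (φ : ℕ → ℕ) (z : X), StrictMono φ ∧
        Filter.Tendsto (fun k => T^[n (φ k)] (x (φ k))) Filter.atTop (nhds z))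
    (x₀ : X) (hx₀ : T x₀ = x₀) (δ : ℝ) (hδ : 0 < δ)
    (huniq : ∀ ξ : ℤ → X, (∀ m : ℤ, T (ξ m) = ξ (m + 1)) →
      (∀ m : ℤ, ‖ξ m - x₀‖ < δ) → ∀ m : ℤ, ξ m = x₀)
    (ξ : ℤ → X) (hξ : ∀ m : ℤ, T (ξ m) = ξ (m + 1))
    (hξB : ∀ m : ℤ, 0 ≤ m → ‖ξ m - x₀‖ < δ / 2) :
    Filter.Tendsto ξ Filter.atTop (nhds x₀) := by
  have hit : ∀ n : ℕ, T^[n] (ξ 0) = ξ n := by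
    intro n
    induction n with
    | zero => simp
    | succ k ih => rw [Function.iterate_succ_apply', ih, hξ]; push_cast; rfl
  have hcomp : ∀ n : ℕ → ℕ, Filter.Tendsto n Filter.atTop Filter.atTop →
      ∃ (φ : ℕ → ℕ) (z : X), StrictMono φ ∧
        Filter.Tendsto (fun k => ξ (n (φ k))) Filter.atTop (nhds z) := by
    intro n hn
    obtain ⟨φ, z, hφ, hz⟩ := hac n (fun _ => ξ 0) hn ⟨‖ξ 0‖, fun _ => le_rfl⟩
      ⟨δ / 2 + ‖x₀‖, fun k => by
        rw [hit]
        have h1 := hξB (n k) (by positivity)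
        have h2 := norm_add_le (ξ (n k) - x₀) x₀
        rw [sub_add_cancel] at h2
        linarith⟩
    refine ⟨φ, z, hφ, ?_⟩
    simpa only [hit] using hz
  let W : Set X := {z | ∃ n : ℕ → ℕ, Filter.Tendsto n Filter.atTop Filter.atTop ∧
    Filter.Tendsto (fun k => ξ (n k)) Filter.atTop (nhds z)}
  have hball : ∀ z ∈ W, ‖z - x₀‖ < δ := by
    rintro z ⟨n, hn, hz⟩
    have : ‖z - x₀‖ ≤ δ / 2 := le_of_tendsto (hz.sub_const x₀).norm
      (Filter.Eventually.of_forall fun k => (hξB (n k) (by positivity)).le)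
    linarith
  have hfwd : ∀ z ∈ W, T z ∈ W := by
    rintro z ⟨n, hn, hz⟩
    refine ⟨fun k => n k + 1, (Filter.tendsto_add_atTop_nat 1).comp hn, ?_⟩
    have := (hT.tendsto z).comp hz
    refine this.congr fun k => ?_
    simp [hξ]
  have hbwd : ∀ z : W, ∃ y : W, T y = z := by
    rintro ⟨z, n, hn, hz⟩
    have hn1 : Filter.Tendsto (fun k => n k - 1) Filter.atTop Filter.atTop :=
      (Filter.tendsto_sub_atTop_nat 1).comp hn
    obtain ⟨φ, y, hφ, hy⟩ := hcomp _ hn1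
    refine ⟨⟨y, fun k => n (φ k) - 1, hn1.comp hφ.tendsto_atTop, hy⟩, ?_⟩
    have h1 := (hT.tendsto y).comp hy
    have h2 := hz.comp hφ.tendsto_atTop
    refine tendsto_nhds_unique h1 (h2.congr' ?_)
    filter_upwards [(hn.comp hφ.tendsto_atTop).eventually_ge_atTop 1] with k hk
    simp only [Function.comp] at hk ⊢
    rw [hξ]
    congr 1
    omega
  choose g hg using hbwd
  have hW : ∀ z ∈ W, z = x₀ := by
    intro z hz
    let η : ℤ → X := fun m => T^[m.toNat] (g^[(-m).toNat] ⟨z, hz⟩ : W)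
    have hη : ∀ m, η m ∈ W := by
      intro m
      have : ∀ (k : ℕ) (w : X), w ∈ W → T^[k] w ∈ W := by
        intro k
        induction k with
        | zero => intro w hw; exact hw
        | succ k ih => intro w hw; exact ih _ (hfwd w hw)
      exact this _ _ (Subtype.property _)
    have h0 := huniq η ?_ (fun m => hball _ (hη m)) 0
    · simpa [η] using h0
    · intro m
      rcases le_or_gt 0 m with hm | hm
      · have e1 : (-m).toNat = 0 := by omega
        have e2 : (-(m + 1)).toNat = 0 := by omega
        have e3 : (m + 1).toNat = m.toNat + 1 := by omega
        simp only [η, e1, e2, e3, Function.iterate_succ_apply']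
      · have e1 : m.toNat = 0 := by omega
        have e2 : (m + 1).toNat = 0 := by omega
        have e3 : (-m).toNat = (-(m + 1)).toNat + 1 := by omega
        simp only [η, e1, e2, e3, Function.iterate_succ_apply', Function.iterate_zero, id, hg]
  have hnat : Filter.Tendsto (fun n : ℕ => ξ n) Filter.atTop (nhds x₀) := by
    refine Filter.tendsto_of_subseq_tendsto fun n hn => ?_
    obtain ⟨φ, z, hφ, hz⟩ := hcomp n hn
    have : z = x₀ := hW z ⟨fun k => n (φ k), hn.comp hφ.tendsto_atTop, hz⟩
    exact ⟨φ, this ▸ hz⟩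
  rw [← Nat.map_cast_int_atTop]
  exact Filter.tendsto_map'_iff.mpr hnat
end

section
/- Let $X$ be a Banach space, $L : X \to X$ a bounded linear operator such that $I - L$ is a bijection with bounded inverse, $U \subseteq X$ an open set containing $0$, and $N : U \to X$ a Lipschitz map with $N(0) = 0$ and Lipschitz constant at most $\gamma$; set $S = L + N$ on $U$. Let $\varepsilon > 0$ and $\delta_1 > 0$ be such that the closed ball $\overline{B_{\delta_1}(0)}$ is contained in $U$, $(\varepsilon + \gamma\delta_1)\|(I-L)^{-1}\| \le \delta_1$, and $(\varepsilon + \gamma)\|(I-L)^{-1}\| < 1$. If $S_1 : U \to X$ satisfies $\sup_{x \in U}\|S_1(x) - S(x)\| \le \varepsilon$ and $S_1 - S$ is Lipschitz on $U$ with Lipschitz constant at most $\varepsilon$, then $S_1$ has exactly one fixed point in $\overline{B_{\delta_1}(0)}$. -/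
/-- Permanence of fixed points under small Lipschitz perturbations:
`S₁` has exactly one fixed point in the closed ball of radius `δ₁`. -/
theorem stmt7 {X : Type*} [NormedAddCommGroup X] [NormedSpace ℝ X] [CompleteSpace X]
    (L : X →L[ℝ] X) (E : X ≃L[ℝ] X) (hE : ∀ x : X, E x = x - L x)
    (U : Set X) (hU : IsOpen U) (h0U : (0 : X) ∈ U)
    (γ ε δ₁ : ℝ) (hγ : 0 ≤ γ) (hε : 0 < ε) (hδ₁ : 0 < δ₁)
    (N : X → X) (hN0 : N 0 = 0)
    (hNLip : ∀ x ∈ U, ∀ y ∈ U, ‖N x - N y‖ ≤ γ * ‖x - y‖)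
    (hball : Metric.closedBall (0 : X) δ₁ ⊆ U)
    (hsmall : (ε + γ * δ₁) * ‖(E.symm : X →L[ℝ] X)‖ ≤ δ₁)
    (hcontr : (ε + γ) * ‖(E.symm : X →L[ℝ] X)‖ < 1)
    (S₁ : X → X)
    (hclose : ∀ x ∈ U, ‖S₁ x - (L x + N x)‖ ≤ ε)
    (hcloseLip : ∀ x ∈ U, ∀ y ∈ U,
      ‖(S₁ x - (L x + N x)) - (S₁ y - (L y + N y))‖ ≤ ε * ‖x - y‖) :
    ∃! x : X, x ∈ Metric.closedBall (0 : X) δ₁ ∧ S₁ x = x := by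
  have hG : ∀ x ∈ U, ∀ y ∈ U, ‖(S₁ x - L x) - (S₁ y - L y)‖ ≤ (ε + γ) * ‖x - y‖ := by
    intro x hx y hy
    have e : (S₁ x - L x) - (S₁ y - L y)
        = ((S₁ x - (L x + N x)) - (S₁ y - (L y + N y))) + (N x - N y) := by abel
    rw [e]
    have h1 := hcloseLip x hx y hy
    have h2 := hNLip x hx y hy
    refine (norm_add_le _ _).trans ?_
    linarith
  have hB : ∀ x ∈ Metric.closedBall (0 : X) δ₁, ‖S₁ x - L x‖ ≤ ε + γ * δ₁ := by
    intro x hx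
    have e : S₁ x - L x = (S₁ x - (L x + N x)) + N x := by abel
    rw [e]
    have h1 := hclose x (hball hx)
    have h2 := hNLip x (hball hx) 0 h0U
    rw [hN0, sub_zero, sub_zero] at h2
    have h3 : ‖x‖ ≤ δ₁ := by simpa using hx
    have h4 := mul_le_mul_of_nonneg_left h3 hγ
    refine (norm_add_le _ _).trans ?_
    linarith
  have hop : ∀ v : X, ‖E.symm v‖ ≤ ‖(E.symm : X →L[ℝ] X)‖ * ‖v‖ :=
    fun v => (E.symm : X →L[ℝ] X).le_opNorm v
  have hfix : ∀ x : X, E.symm (S₁ x - L x) = x ↔ S₁ x = x := by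
    intro x
    rw [ContinuousLinearEquiv.symm_apply_eq, hE]
    exact sub_left_inj
  have hlip : ∀ x ∈ U, ∀ y ∈ U, ‖E.symm (S₁ x - L x) - E.symm (S₁ y - L y)‖
      ≤ ((ε + γ) * ‖(E.symm : X →L[ℝ] X)‖) * ‖x - y‖ := by
    intro x hx y hy
    rw [← map_sub]
    have := mul_le_mul_of_nonneg_left (hG x hx y hy) (norm_nonneg (E.symm : X →L[ℝ] X))
    refine (hop _).trans (this.trans (le_of_eq (by ring)))
  have hmaps : ∀ x ∈ Metric.closedBall (0 : X) δ₁,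
      E.symm (S₁ x - L x) ∈ Metric.closedBall (0 : X) δ₁ := by
    intro x hx
    rw [mem_closedBall_zero_iff]
    have := mul_le_mul_of_nonneg_left (hB x hx) (norm_nonneg (E.symm : X →L[ℝ] X))
    refine (hop _).trans (this.trans (le_trans (le_of_eq (by ring)) hsmall))
  let K : NNReal := ⟨(ε + γ) * ‖(E.symm : X →L[ℝ] X)‖, by positivity⟩
  let T : Metric.closedBall (0 : X) δ₁ → Metric.closedBall (0 : X) δ₁ :=
    fun x => ⟨E.symm (S₁ x - L x), hmaps x x.2⟩
  haveI : CompleteSpace (Metric.closedBall (0 : X) δ₁) :=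
    Metric.isClosed_closedBall.completeSpace_coe
  haveI : Nonempty (Metric.closedBall (0 : X) δ₁) :=
    ⟨⟨0, Metric.mem_closedBall_self hδ₁.le⟩⟩
  have hT : ContractingWith K T := by
    refine ⟨by exact_mod_cast hcontr, LipschitzWith.of_dist_le_mul fun x y => ?_⟩
    rw [Subtype.dist_eq, Subtype.dist_eq, dist_eq_norm, dist_eq_norm]
    exact hlip x (hball x.2) y (hball y.2)
  refine ⟨(hT.fixedPoint T : Metric.closedBall (0 : X) δ₁),
    ⟨(hT.fixedPoint T).2, ?_⟩, ?_⟩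
  · rw [← hfix]
    exact congrArg Subtype.val hT.fixedPoint_isFixedPt
  · rintro y ⟨hy, hyS⟩
    have : Function.IsFixedPt T ⟨y, hy⟩ := Subtype.ext ((hfix y).2 hyS)
    exact congrArg Subtype.val (hT.fixedPoint_unique this)
end

section
/- Let $X_1, X_2$ be Banach spaces, $r > 0$, $0 < c < 1$, and $z \in X_1 \times X_2$. Let $\theta, \tilde\theta : B_r^{X_1}(0) \to X_2$ and $\sigma, \tilde\sigma : B_r^{X_2}(0) \to X_1$ be maps with $\theta(0) = 0$, $\sigma(0) = 0$, $\mathrm{Lip}(\theta) \le c$, $\mathrm{Lip}(\sigma) \le c$, and suppose $\|\theta(y) - \tilde\theta(y)\| \le (1-c)r/2$ for all $y \in B_r^{X_1}(0)$ and $\|\sigma(x) - \tilde\sigma(x)\| \le (1-c)r/2$ for all $x \in B_r^{X_2}(0)$. If $\tilde\theta$ and $\tilde\sigma$ are Lipschitz with $\mathrm{Lip}(\tilde\theta)\cdot\mathrm{Lip}(\tilde\sigma) < 1$, then the sets $\tilde M = \{z + (y, \tilde\theta(y)) : y \in B_r^{X_1}(0)\}$ and $\tilde N = \{z + (\tilde\sigma(x),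 x) : x \in B_r^{X_2}(0)\}$ have nonempty intersection; moreover there is a unique $y_1$ in the closed ball of radius $r/2$ in $X_1$ with $\tilde\sigma(\tilde\theta(y_1)) = y_1$, and $z + (y_1, \tilde\theta(y_1)) \in \tilde M \cap \tilde N$. -/
/-- Persistence of transversal intersections (contraction case):
if `Lip(θ̃)·Lip(σ̃) < 1` the perturbed graphs intersect at a unique point
obtained as the fixed point of `σ̃ ∘ θ̃` in the ball of radius `r/2`. -/
theorem stmt9 {X₁ X₂ : Type*}
    [NormedAddCommGroup X₁] [NormedSpace ℝ X₁] [CompleteSpace X₁]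
    [NormedAddCommGroup X₂] [NormedSpace ℝ X₂] [CompleteSpace X₂]
    (r c : ℝ) (hr : 0 < r) (hc0 : 0 < c) (hc1 : c < 1) (z : X₁ × X₂)
    (θ tθ : X₁ → X₂) (σ tσ : X₂ → X₁)
    (hθ0 : θ 0 = 0) (hσ0 : σ 0 = 0)
    (hθLip : ∀ y₁ ∈ Metric.ball (0 : X₁) r, ∀ y₂ ∈ Metric.ball (0 : X₁) r,
      ‖θ y₁ - θ y₂‖ ≤ c * ‖y₁ - y₂‖)
    (hσLip : ∀ x₁ ∈ Metric.ball (0 : X₂) r, ∀ x₂ ∈ Metric.ball (0 : X₂) r,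
      ‖σ x₁ - σ x₂‖ ≤ c * ‖x₁ - x₂‖)
    (hθclose : ∀ y ∈ Metric.ball (0 : X₁) r, ‖θ y - tθ y‖ ≤ (1 - c) * r / 2)
    (hσclose : ∀ x ∈ Metric.ball (0 : X₂) r, ‖σ x - tσ x‖ ≤ (1 - c) * r / 2)
    (cθ cσ : ℝ) (hcθ : 0 ≤ cθ) (hcσ : 0 ≤ cσ)
    (htθLip : ∀ y₁ ∈ Metric.ball (0 : X₁) r, ∀ y₂ ∈ Metric.ball (0 : X₁) r,
      ‖tθ y₁ - tθ y₂‖ ≤ cθ * ‖y₁ - y₂‖)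
    (htσLip : ∀ x₁ ∈ Metric.ball (0 : X₂) r, ∀ x₂ ∈ Metric.ball (0 : X₂) r,
      ‖tσ x₁ - tσ x₂‖ ≤ cσ * ‖x₁ - x₂‖)
    (hprod : cθ * cσ < 1) :
    ∃ y₁ : X₁, ‖y₁‖ ≤ r / 2 ∧ tσ (tθ y₁) = y₁ ∧
      z + (y₁, tθ y₁) ∈
        {p : X₁ × X₂ | ∃ y ∈ Metric.ball (0 : X₁) r, p = z + (y, tθ y)} ∩
        {p : X₁ × X₂ | ∃ x ∈ Metric.ball (0 : X₂) r, p = z + (tσ x, x)} ∧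
      ∀ y' : X₁, ‖y'‖ ≤ r / 2 → tσ (tθ y') = y' → y' = y₁ := by
  have key : ∀ y : X₁, ‖y‖ ≤ r / 2 → ‖tθ y‖ ≤ r / 2 := by
    intro y hy
    have hb : y ∈ Metric.ball (0 : X₁) r := by
      rw [mem_ball_zero_iff]; linarith
    have h1 := hθLip y hb 0 (Metric.mem_ball_self hr)
    rw [hθ0, sub_zero, sub_zero] at h1
    have h2 := hθclose y hb
    have h3 : ‖tθ y‖ ≤ ‖θ y‖ + ‖θ y - tθ y‖ := norm_le_norm_add_norm_sub (θ y) (tθ y)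
    have h4 : c * ‖y‖ ≤ c * (r / 2) := mul_le_mul_of_nonneg_left hy hc0.le
    linarith
  have key2 : ∀ y : X₂, ‖y‖ ≤ r / 2 → ‖tσ y‖ ≤ r / 2 := by
    intro y hy
    have hb : y ∈ Metric.ball (0 : X₂) r := by
      rw [mem_ball_zero_iff]; linarith
    have h1 := hσLip y hb 0 (Metric.mem_ball_self hr)
    rw [hσ0, sub_zero, sub_zero] at h1
    have h2 := hσclose y hb
    have h3 : ‖tσ y‖ ≤ ‖σ y‖ + ‖σ y - tσ y‖ := norm_le_norm_add_norm_sub (σ y) (tσ y)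
    have h4 : c * ‖y‖ ≤ c * (r / 2) := mul_le_mul_of_nonneg_left hy hc0.le
    linarith
  have hball1 : ∀ y : X₁, ‖y‖ ≤ r / 2 → y ∈ Metric.ball (0 : X₁) r := by
    intro y hy
    rw [mem_ball_zero_iff]; linarith
  have hball2 : ∀ y : X₂, ‖y‖ ≤ r / 2 → y ∈ Metric.ball (0 : X₂) r := by
    intro y hy
    rw [mem_ball_zero_iff]; linarith
  have hcontr : ∀ a b : X₁, ‖a‖ ≤ r / 2 → ‖b‖ ≤ r / 2 →
      ‖tσ (tθ a) - tσ (tθ b)‖ ≤ cθ * cσ * ‖a - b‖ := by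
    intro a b ha hb
    have h1 := htθLip a (hball1 a ha) b (hball1 b hb)
    have h2 := htσLip _ (hball2 _ (key a ha)) _ (hball2 _ (key b hb))
    have h3 := mul_le_mul_of_nonneg_left h1 hcσ
    linarith
  let S : Set X₁ := Metric.closedBall (0 : X₁) (r / 2)
  have hS : ∀ y : X₁, y ∈ S ↔ ‖y‖ ≤ r / 2 := fun y => mem_closedBall_zero_iff
  haveI : CompleteSpace S := (Metric.isClosed_closedBall : IsClosed S).completeSpace_coe
  haveI : Nonempty S := ⟨⟨0, (hS 0).2 (by rw [norm_zero]; linarith)⟩⟩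
  let f : S → S := fun y => ⟨tσ (tθ y), (hS _).2 (key2 _ (key _ ((hS _).1 y.2)))⟩
  have hf : ContractingWith ⟨cθ * cσ, mul_nonneg hcθ hcσ⟩ f := by
    refine ⟨hprod, LipschitzWith.of_dist_le_mul fun a b => ?_⟩
    rw [Subtype.dist_eq, Subtype.dist_eq, dist_eq_norm, dist_eq_norm]
    exact hcontr a b ((hS _).1 a.2) ((hS _).1 b.2)
  obtain ⟨y, hy⟩ : ∃ y : S, f y = y := ⟨_, hf.fixedPoint_isFixedPt⟩
  have hyn : ‖(y : X₁)‖ ≤ r / 2 := (hS _).1 y.2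
  have hyf : tσ (tθ y) = y := congrArg Subtype.val hy
  refine ⟨y, hyn, hyf, ⟨⟨y, hball1 _ hyn, rfl⟩, ⟨tθ y, hball2 _ (key _ hyn), by rw [hyf]⟩⟩, ?_⟩
  intro y' hy' hfy'
  have h := hcontr y' y hy' hyn
  rw [hfy', hyf] at h
  have h0 : ‖y' - (y : X₁)‖ = 0 := by
    by_contra hne
    have hpos : 0 < ‖y' - (y : X₁)‖ := lt_of_le_of_ne (norm_nonneg _) (Ne.symm hne)
    nlinarith
  exact sub_eq_zero.1 (norm_eq_zero.1 h0)
end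

section
/- Let $X_1$ be a finite-dimensional normed real vector space, $X_2$ a Banach space, $r > 0$, $0 < c < 1$, and $z \in X_1 \times X_2$. Let $\theta, \tilde\theta : B_r^{X_1}(0) \to X_2$ and $\sigma, \tilde\sigma : B_r^{X_2}(0) \to X_1$ be continuous maps with $\theta(0) = 0$, $\sigma(0) = 0$, $\mathrm{Lip}(\theta) \le c$, $\mathrm{Lip}(\sigma) \le c$, and suppose $\|\theta(y) - \tilde\theta(y)\| \le (1-c)r/2$ for all $y \in B_r^{X_1}(0)$ and $\|\sigma(x) - \tilde\sigma(x)\| \le (1-c)r/2$ for all $x \in B_r^{X_2}(0)$. Then the sets $\tilde M = \{z + (y, \tilde\theta(y)) : y \in B_r^{X_1}(0)\}$ and $\tilde N = \{z + (\tilde\sigma(x), x) : x \in B_r^{X_2}(0)\}$ have nonempty intersection. -/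
section Brouwer
open MeasureTheory Polynomial

lemma perturb_bij {E : Type*} [NormedAddCommGroup E] [NormedSpace ℝ E] [CompleteSpace E]
    {g : E → E} {K : NNReal} (hg : LipschitzWith K g) {t : ℝ} (ht : 0 ≤ t) (htK : t * K < 1) :
    Function.Bijective (fun x => x + t • g x) := by
  have key : ∀ x y, ‖t • g x - t • g y‖ ≤ (t * K) * ‖x - y‖ := by
    intro x y
    rw [← smul_sub, norm_smul, Real.norm_of_nonneg ht, mul_assoc]
    exact mul_le_mul_of_nonneg_left (hg.norm_sub_le x y) ht
  constructor
  · intro x y hxy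
    have hxy' : x + t • g x = y + t • g y := hxy
    have h1 : x - y = -(t • g x - t • g y) := by
      rw [neg_sub, sub_eq_sub_iff_add_eq_add, hxy', add_comm]
    have h2 := key x y
    rw [← norm_neg (t • g x - t • g y), ← h1] at h2
    have h3 : ‖x - y‖ = 0 := by nlinarith [norm_nonneg (x - y)]
    exact sub_eq_zero.mp (norm_eq_zero.mp h3)
  · intro y
    have hc : ContractingWith (Real.toNNReal (t * K)) (fun x => y - t • g x) := by
      refine ⟨Real.toNNReal_lt_one.mpr htK, LipschitzWith.of_dist_le_mul fun a b => ?_⟩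
      rw [dist_eq_norm, dist_eq_norm]
      have : y - t • g a - (y - t • g b) = -(t • g a - t • g b) := by abel
      rw [this, norm_neg, Real.coe_toNNReal _ (by positivity)]
      exact key a b
    have hfix := hc.fixedPoint_isFixedPt
    refine ⟨hc.fixedPoint, ?_⟩
    have h : y - t • g hc.fixedPoint = hc.fixedPoint := hfix
    exact (sub_eq_iff_eq_add.mp h).symm

lemma image_closedBall_eq {E : Type*} [NormedAddCommGroup E] {f : E → E}
    (hf : Function.Bijective f) {R : ℝ} (hR : ∀ x, x ∉ Metric.closedBall (0:E) R → f x = x) :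
    f '' Metric.closedBall (0:E) R = Metric.closedBall (0:E) R := by
  ext y
  constructor
  · rintro ⟨x, hx, rfl⟩
    by_contra hy
    have := hf.1 (hR _ hy)
    rw [this] at hy
    exact hy hx
  · intro hy
    obtain ⟨x, rfl⟩ := hf.2 y
    refine ⟨x, ?_, rfl⟩
    by_contra hx
    rw [hR x hx] at hy
    exact hx hy

lemma det_poly {E : Type*} [NormedAddCommGroup E] [NormedSpace ℝ E] [FiniteDimensional ℝ E]
    (A : E →L[ℝ] E) : ∃ p : ℝ[X], p.natDegree ≤ Module.finrank ℝ E ∧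
      ∀ t : ℝ, p.eval t = (1 + t • A : E →L[ℝ] E).det := by
  let b := Module.finBasis ℝ E
  let M := LinearMap.toMatrix b b (A : E →ₗ[ℝ] E)
  refine ⟨Matrix.det ((X : ℝ[X]) • M.map C + (1 : Matrix _ _ ℝ).map C), ?_, ?_⟩
  · simpa using natDegree_det_X_add_C_le M 1
  · intro t
    rw [ContinuousLinearMap.det, ← LinearMap.det_toMatrix b, ← coe_evalRingHom, RingHom.map_det]
    congr 1
    ext i j
    have : LinearMap.toMatrix b b ((1 + t • A : E →L[ℝ] E) : E →ₗ[ℝ] E) = 1 + t • M := by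
      have : ((1 + t • A : E →L[ℝ] E) : E →ₗ[ℝ] E) = LinearMap.id + t • (A : E →ₗ[ℝ] E) := rfl
      rw [this, map_add, map_smul, LinearMap.toMatrix_id]
    rw [this]
    simp only [RingHom.mapMatrix_apply, Matrix.map_apply, Matrix.add_apply, Matrix.smul_apply,
      smul_eq_mul, coe_evalRingHom, eval_add, eval_mul, eval_X, eval_C]
    ring

lemma det_pos_near {E : Type*} [NormedAddCommGroup E] [NormedSpace ℝ E] [FiniteDimensional ℝ E] :
    ∃ ε > 0, ∀ A : E →L[ℝ] E, ‖A‖ < ε → 0 < (1 + A).det := by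
  have hc : Continuous fun A : E →L[ℝ] E => (1 + A).det :=
    ContinuousLinearMap.continuous_det.comp (continuous_const.add continuous_id)
  have h0 : (0:ℝ) < (fun A : E →L[ℝ] E => (1 + A).det) 0 := by
    simp [ContinuousLinearMap.det]
  obtain ⟨ε, hε, h⟩ := Metric.eventually_nhds_iff.mp (hc.continuousAt.eventually (lt_mem_nhds h0))
  exact ⟨ε, hε, fun A hA => h (by simpa using hA)⟩

lemma integral_identity {E : Type*} [NormedAddCommGroup E] [NormedSpace ℝ E]
    [FiniteDimensional ℝ E] [MeasurableSpace E] [BorelSpace E] (μ : Measure E) [μ.IsAddHaarMeasure]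
    {g : E → E} (hg : ContDiff ℝ 1 g) (hgs : HasCompactSupport g) {R : ℝ}
    (hR : ∀ x, x ∉ Metric.closedBall (0:E) R → g x = 0)
    {φ : E → ℝ} (hφ : Continuous φ) {N : ℕ}
    (hp : ∀ x v, ∃ p : ℝ[X], p.natDegree ≤ N ∧ ∀ t, p.eval t = φ (x + t • v)) :
    ∫ x in Metric.closedBall (0:E) R, (1 + fderiv ℝ g x).det * φ (x + g x) ∂μ
      = ∫ x in Metric.closedBall (0:E) R, φ x ∂μ := by
  set B := Metric.closedBall (0:E) R with hB
  have : ProperSpace E := FiniteDimensional.proper ℝ E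
  have : CompleteSpace E := FiniteDimensional.complete ℝ E
  obtain ⟨K, hK⟩ := hg.lipschitzWith_of_hasCompactSupport hgs one_ne_zero
  obtain ⟨ε, hε, hdet⟩ := det_pos_near (E := E)
  let P : ℝ → E → ℝ := fun t x => (1 + t • fderiv ℝ g x).det * φ (x + t • g x)
  have hPcont : ∀ t, Continuous (P t) := by
    intro t
    have h1 : Continuous (fderiv ℝ g) := hg.continuous_fderiv one_ne_zero
    have h2 : Continuous g := hg.continuous
    exact (ContinuousLinearMap.continuous_det.comp
      (continuous_const.add (h1.const_smul t))).mul
      (hφ.comp (continuous_id.add (h2.const_smul t)))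
  have hPint : ∀ t, IntegrableOn (P t) B μ := fun t =>
    (hPcont t).continuousOn.integrableOn_compact (isCompact_closedBall _ _)
  -- small times
  have hsmall : ∃ τ > 0, ∀ t, 0 ≤ t → t < τ → ∫ x in B, P t x ∂μ = ∫ x in B, φ x ∂μ := by
    refine ⟨min 1 ε / (K + 1), by positivity, fun t ht htτ => ?_⟩
    have hK1 : (0:ℝ) < K + 1 := by positivity
    have h1 : t * (K + 1) < min 1 ε := (lt_div_iff₀ hK1).mp htτ
    have h2 : t * K ≤ t * (K + 1) := by nlinarith
    have hbij := perturb_bij hK ht (h2.trans_lt (h1.trans_le (min_le_left _ _)))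
    have himg := image_closedBall_eq hbij (R := R) (fun x hx => by simp [hR x hx])
    have hder : ∀ x ∈ B, HasFDerivWithinAt (fun x => x + t • g x)
        (1 + t • fderiv ℝ g x : E →L[ℝ] E) B x := by
      intro x _
      have hd : HasFDerivAt g (fderiv ℝ g x) x :=
        ((hg.differentiable one_ne_zero) x).hasFDerivAt
      exact ((hasFDerivAt_id x).add (hd.const_smul t)).hasFDerivWithinAt
    have hcv := integral_image_eq_integral_abs_det_fderiv_smul μ
      Metric.isClosed_closedBall.measurableSet hder hbij.1.injOn φ
    rw [himg] at hcv
    rw [hcv]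
    refine setIntegral_congr_fun Metric.isClosed_closedBall.measurableSet fun x _ => ?_
    have hpos : 0 < (1 + t • fderiv ℝ g x : E →L[ℝ] E).det := by
      apply hdet
      rw [norm_smul, Real.norm_of_nonneg ht]
      calc t * ‖fderiv ℝ g x‖ ≤ t * K :=
            mul_le_mul_of_nonneg_left (norm_fderiv_le_of_lipschitz ℝ hK) ht
        _ < ε := h2.trans_lt (h1.trans_le (min_le_right _ _))
    simp only [P, abs_of_pos hpos, smul_eq_mul]
  obtain ⟨τ, hτ, hsmall⟩ := hsmall
  let D := Module.finrank ℝ E + N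
  let s : Finset ℕ := Finset.range (D + 1)
  let v : ℕ → ℝ := fun i => τ * (i / (D + 1 : ℝ))
  have hD : (0:ℝ) < (D:ℝ) + 1 := by positivity
  have hv : Set.InjOn v s := by
    intro i _ j _ hij
    have : τ * (i / (D + 1 : ℝ)) = τ * (j / (D + 1 : ℝ)) := hij
    have := mul_left_cancel₀ hτ.ne' this
    have := (div_left_inj' hD.ne').mp this
    exact_mod_cast this
  have hs : s.Nonempty := ⟨0, by simp [s]⟩
  have hv0 : ∀ i ∈ s, 0 ≤ v i ∧ v i < τ := by
    intro i hi
    have hi' : (i:ℝ) < D + 1 := by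
      have := Finset.mem_range.mp hi
      exact_mod_cast this
    refine ⟨by positivity, ?_⟩
    have : (i:ℝ) / (D + 1) < 1 := (div_lt_one hD).mpr hi'
    exact mul_lt_of_lt_one_right hτ this
  let L : ℕ → ℝ := fun i => (Lagrange.basis s v i).eval 1
  have hL : ∑ i ∈ s, L i = 1 := by
    have := congrArg (eval 1) (Lagrange.sum_basis hv hs)
    simpa [eval_finsetSum] using this
  have hinterp : ∀ x, P 1 x = ∑ i ∈ s, L i * P (v i) x := by
    intro x
    obtain ⟨p, hpd, hpe⟩ := det_poly (fderiv ℝ g x)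
    obtain ⟨q, hqd, hqe⟩ := hp x (g x)
    have hPe : ∀ t, P t x = (p * q).eval t := by
      intro t; rw [eval_mul, hpe, hqe]
    have hdeg : (p * q).degree < s.card := by
      refine degree_le_natDegree.trans_lt ?_
      have : (p * q).natDegree < s.card := by
        have := natDegree_mul_le (p := p) (q := q)
        simp only [s, D, Finset.card_range]
        omega
      exact_mod_cast this
    have := congrArg (eval 1) (Lagrange.eq_interpolate hv hdeg)
    rw [hPe, this, Lagrange.interpolate_apply, eval_finsetSum]
    refine Finset.sum_congr rfl fun i _ => ?_
    rw [hPe, eval_mul, eval_C, mul_comm]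
  have hfin : ∫ x in B, P 1 x ∂μ = ∫ x in B, φ x ∂μ := by
    simp_rw [hinterp]
    rw [integral_finsetSum _ (fun i _ => (hPint (v i)).const_mul (L i))]
    simp_rw [integral_const_mul]
    rw [Finset.sum_congr rfl fun i hi => by rw [hsmall _ (hv0 i hi).1 (hv0 i hi).2],
      ← Finset.sum_mul, hL, one_mul]
  simpa [P] using hfin

lemma q_poly {E : Type*} [NormedAddCommGroup E] [InnerProductSpace ℝ E] (R : ℝ) (m : ℕ) (x v : E) :
    ∃ p : ℝ[X], p.natDegree ≤ m * 2 ∧ ∀ t, p.eval t = (1 - ‖x + t • v‖ ^ 2 / R ^ 2) ^ m := by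
  refine ⟨(C (-(‖v‖ ^ 2 / R ^ 2)) * X ^ 2 + C (-(2 * inner ℝ x v / R ^ 2)) * X
    + C (1 - ‖x‖ ^ 2 / R ^ 2)) ^ m, ?_, fun t => ?_⟩
  · exact natDegree_pow_le_of_le m natDegree_quadratic_le
  · simp only [eval_pow, eval_add, eval_mul, eval_C, eval_X]
    congr 1
    rw [norm_add_sq_real, norm_smul, inner_smul_right, mul_pow, Real.norm_eq_abs, sq_abs]
    ring

lemma exists_zero_smooth {E : Type*} [NormedAddCommGroup E] [InnerProductSpace ℝ E]
    [FiniteDimensional ℝ E]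
    {g : E → E} (hg : ContDiff ℝ 1 g) (hgs : HasCompactSupport g) : ∃ x, x + g x = 0 := by
  by_contra! hne
  let _ : MeasurableSpace E := borel E
  have : BorelSpace E := ⟨rfl⟩
  have : ProperSpace E := FiniteDimensional.proper ℝ E
  let μ : Measure E := volume
  obtain ⟨M, hM⟩ := hgs.exists_bound_of_continuous hg.continuous
  obtain ⟨R0, hR0⟩ := hgs.isCompact.isBounded.subset_closedBall (0:E)
  have hM0 : 0 ≤ M := (norm_nonneg _).trans (hM 0)
  set R := |R0| + M + 1 with hRdef
  have hRpos : 0 < R := by positivity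
  have hg0 : ∀ x, R0 < ‖x‖ → g x = 0 := by
    intro x hx
    by_contra h
    have := hR0 (subset_tsupport _ h)
    rw [mem_closedBall_zero_iff] at this
    linarith
  set B := Metric.closedBall (0:E) R with hB
  have hBc : IsCompact B := isCompact_closedBall _ _
  have hBm : MeasurableSet B := Metric.isClosed_closedBall.measurableSet
  have hgR : ∀ x, x ∉ B → g x = 0 := by
    intro x hx
    apply hg0
    rw [hB, mem_closedBall_zero_iff, not_le] at hx
    linarith [le_abs_self R0]
  have hfB : ∀ x ∈ B, ‖x + g x‖ ≤ R := by
    intro x hx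
    by_cases h : R0 < ‖x‖
    · rw [hg0 x h, add_zero]; simpa [hB] using hx
    · have := norm_add_le x (g x)
      linarith [hM x, le_abs_self R0]
  have hfc : Continuous fun x => x + g x := continuous_id.add hg.continuous
  have h0B : (0:E) ∈ B := by simp [hB, hRpos.le]
  obtain ⟨x0, hx0, hmin⟩ := hBc.exists_isMinOn ⟨0, h0B⟩ hfc.norm.continuousOn
  set δ := ‖x0 + g x0‖ with hδ
  have hδpos : 0 < δ := norm_pos_iff.mpr (hne x0)
  have hδR : δ ≤ R := hfB x0 hx0
  have hδle : ∀ x ∈ B, δ ≤ ‖x + g x‖ := fun x hx => hmin hx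
  set a := 1 - δ ^ 2 / R ^ 2 with ha
  set b := 1 - (δ / 2) ^ 2 / R ^ 2 with hb
  have ha0 : 0 ≤ a := by
    have : δ ^ 2 / R ^ 2 ≤ 1 := (div_le_one (by positivity)).mpr (by gcongr)
    linarith
  have hab : a < b := by
    have : (δ / 2) ^ 2 / R ^ 2 < δ ^ 2 / R ^ 2 := by gcongr; linarith
    linarith
  have hb0 : 0 < b := ha0.trans_lt hab
  have hdc : Continuous fun x => (1 + fderiv ℝ g x).det :=
    ContinuousLinearMap.continuous_det.comp
      (continuous_const.add (hg.continuous_fderiv one_ne_zero))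
  set Cc := ∫ x in B, |(1 + fderiv ℝ g x).det| ∂μ with hCc
  have hC0 : 0 ≤ Cc := integral_nonneg fun x => abs_nonneg _
  set S := Metric.closedBall (0:E) (δ / 2) with hS
  have hSB : S ⊆ B := Metric.closedBall_subset_closedBall (by linarith)
  have hSm : MeasurableSet S := Metric.isClosed_closedBall.measurableSet
  set V := μ.real S with hV
  have hSfin : μ S ≠ ⊤ := (isCompact_closedBall _ _).measure_ne_top
  have hVpos : 0 < V := by
    rw [hV, Measure.real, ENNReal.toReal_pos_iff]
    exact ⟨Metric.measure_closedBall_pos μ _ (by positivity), lt_top_iff_ne_top.mpr hSfin⟩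
  have main : ∀ m : ℕ, b ^ m * V ≤ a ^ m * Cc := by
    intro m
    have hqc : Continuous fun y : E => (1 - ‖y‖ ^ 2 / R ^ 2) ^ m := by fun_prop
    have hid := integral_identity μ hg hgs hgR hqc (q_poly R m)
    have hq0 : ∀ y ∈ B, 0 ≤ 1 - ‖y‖ ^ 2 / R ^ 2 := by
      intro y hy
      have hy' : ‖y‖ ≤ R := by simpa [hB] using hy
      have : ‖y‖ ^ 2 / R ^ 2 ≤ 1 := (div_le_one (by positivity)).mpr (by gcongr)
      linarith
    have hqi : IntegrableOn (fun y : E => (1 - ‖y‖ ^ 2 / R ^ 2) ^ m) B μ :=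
      hqc.continuousOn.integrableOn_compact hBc
    calc b ^ m * V = ∫ y in S, b ^ m ∂μ := by
            rw [setIntegral_const, smul_eq_mul, mul_comm]
      _ ≤ ∫ y in S, (1 - ‖y‖ ^ 2 / R ^ 2) ^ m ∂μ := by
            refine setIntegral_mono_on (integrableOn_const hSfin) (hqi.mono_set hSB) hSm ?_
            intro y hy
            have hy' : ‖y‖ ≤ δ / 2 := by simpa [hS] using hy
            have : ‖y‖ ^ 2 / R ^ 2 ≤ (δ / 2) ^ 2 / R ^ 2 := by gcongr
            exact pow_le_pow_left₀ hb0.le (by linarith) m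
      _ ≤ ∫ y in B, (1 - ‖y‖ ^ 2 / R ^ 2) ^ m ∂μ := by
            refine setIntegral_mono_set hqi ?_ hSB.eventuallyLE
            filter_upwards [ae_restrict_mem hBm] with y hy
            exact pow_nonneg (hq0 y hy) m
      _ = ∫ x in B, (1 + fderiv ℝ g x).det * (1 - ‖x + g x‖ ^ 2 / R ^ 2) ^ m ∂μ := hid.symm
      _ ≤ ∫ x in B, a ^ m * |(1 + fderiv ℝ g x).det| ∂μ := by
            refine setIntegral_mono_on ?_ ?_ hBm ?_
            · exact (hdc.mul (hqc.comp hfc)).continuousOn.integrableOn_compact hBc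
            · exact (continuous_const.mul hdc.abs).continuousOn.integrableOn_compact hBc
            · intro x hx
              have h1 : 0 ≤ 1 - ‖x + g x‖ ^ 2 / R ^ 2 :=
                hq0 _ (by simpa [hB] using hfB x hx)
              have h2 : 1 - ‖x + g x‖ ^ 2 / R ^ 2 ≤ a := by
                have : δ ^ 2 / R ^ 2 ≤ ‖x + g x‖ ^ 2 / R ^ 2 := by
                  have := hδle x hx
                  gcongr
                linarith
              have h3 := pow_le_pow_left₀ h1 h2 m
              have h4 := pow_nonneg h1 m
              calc _ ≤ |(1 + fderiv ℝ g x).det| * (1 - ‖x + g x‖ ^ 2 / R ^ 2) ^ m :=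
                    mul_le_mul_of_nonneg_right (le_abs_self _) h4
                _ ≤ |(1 + fderiv ℝ g x).det| * a ^ m :=
                    mul_le_mul_of_nonneg_left h3 (abs_nonneg _)
                _ = _ := mul_comm _ _
      _ = a ^ m * Cc := integral_const_mul _ _
  obtain ⟨m, hm⟩ := exists_pow_lt_of_lt_one (div_pos hVpos (by linarith : 0 < Cc + 1))
    ((div_lt_one hb0).mpr hab)
  rw [div_pow, div_lt_div_iff₀ (by positivity) (by linarith)] at hm
  have := main m
  have := pow_nonneg ha0 m
  nlinarith

lemma fixed_point_inner {E : Type*} [NormedAddCommGroup E] [InnerProductSpace ℝ E]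
    [FiniteDimensional ℝ E] {h : E → E} (hc : Continuous h) {ρ : ℝ} (hρ : ∀ x, ‖h x‖ ≤ ρ) :
    ∃ x, h x = x := by
  by_contra! hne
  have : ProperSpace E := FiniteDimensional.proper ℝ E
  have hρ0 : 0 ≤ ρ := (norm_nonneg _).trans (hρ 0)
  let lam : ContDiffBump (0:E) := ⟨ρ + 1, ρ + 2, by linarith, by linarith⟩
  let G : E → E := fun x => -(lam x • h x)
  have hGc : Continuous G := (lam.continuous.smul hc).neg
  have hGs : HasCompactSupport G := (lam.hasCompactSupport.smul_right).neg
  obtain ⟨x0, -, hmin⟩ := (isCompact_closedBall (0:E) (ρ + 1)).exists_isMinOn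
    ⟨0, by simp; linarith⟩ (hc.sub continuous_id).norm.continuousOn
  set δ := ‖h x0 - x0‖ with hδ
  have hδpos : 0 < δ := norm_pos_iff.mpr (sub_ne_zero.mpr (hne x0))
  obtain ⟨g, hg, happ, hsupp⟩ := hGc.exists_contDiff_approx 1 (ε := fun _ => min δ 1)
    continuous_const (fun _ => by positivity)
  have hgs : HasCompactSupport g := hGs.mono hsupp
  obtain ⟨x, hx⟩ := exists_zero_smooth hg hgs
  have h1 := happ x
  rw [dist_eq_norm] at h1
  have hgx : g x = -x := (neg_eq_of_add_eq_zero_right hx).symm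
  have h2 : ‖lam x • h x - x‖ < min δ 1 := by
    have : g x - G x = lam x • h x - x := by simp only [G, hgx]; abel
    rwa [this] at h1
  have h3 : ‖lam x • h x‖ ≤ ρ := by
    rw [norm_smul, Real.norm_of_nonneg lam.nonneg]
    exact (mul_le_of_le_one_left (norm_nonneg _) lam.le_one).trans (hρ x)
  have h4 : ‖x‖ ≤ ρ + 1 := by
    have h5 := norm_sub_norm_le x (lam x • h x)
    rw [norm_sub_rev] at h5
    linarith [min_le_right δ 1]
  have h6 : lam x = 1 := lam.one_of_mem_closedBall (by simpa [lam] using h4)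
  rw [h6, one_smul] at h2
  have h7 : δ ≤ ‖h x - x‖ := hmin (by simpa using h4)
  linarith [min_le_left δ 1]

lemma fixed_point_normed {E : Type*} [NormedAddCommGroup E] [NormedSpace ℝ E]
    [FiniteDimensional ℝ E] {h : E → E} (hc : Continuous h) {ρ : ℝ} (hρ : ∀ x, ‖h x‖ ≤ ρ) :
    ∃ x, h x = x := by
  let L := toEuclidean (E := E)
  have hb : ∀ x, ‖L (h (L.symm x))‖ ≤ ‖L.toContinuousLinearMap‖ * ρ := fun x =>
    (L.toContinuousLinearMap.le_opNorm _).trans (mul_le_mul_of_nonneg_left (hρ _) (norm_nonneg _))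
  obtain ⟨x, hx⟩ := fixed_point_inner (h := fun x => L (h (L.symm x)))
    (L.continuous.comp (hc.comp L.symm.continuous)) hb
  exact ⟨L.symm x, by rw [← L.symm_apply_apply (h (L.symm x)), hx]⟩

lemma brouwer_closedBall {E : Type*} [NormedAddCommGroup E] [NormedSpace ℝ E]
    [FiniteDimensional ℝ E] {R : ℝ} (hR : 0 < R) {h : E → E}
    (hc : ContinuousOn h (Metric.closedBall 0 R))
    (hm : ∀ x ∈ Metric.closedBall (0:E) R, ‖h x‖ ≤ R) :
    ∃ x ∈ Metric.closedBall (0:E) R, h x = x := by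
  let ret : E → E := fun x => (R / max R ‖x‖) • x
  have hmax : ∀ x : E, 0 < max R ‖x‖ := fun x => lt_max_of_lt_left hR
  have hrc : Continuous ret := by
    refine Continuous.smul (continuous_const.div (continuous_const.max continuous_norm) ?_)
      continuous_id
    exact fun x => (hmax x).ne'
  have hrm : ∀ x, ret x ∈ Metric.closedBall (0:E) R := by
    intro x
    rw [mem_closedBall_zero_iff, norm_smul, Real.norm_of_nonneg (div_pos hR (hmax x)).le,
      div_mul_eq_mul_div, div_le_iff₀ (hmax x)]
    exact mul_le_mul_of_nonneg_left (le_max_right _ _) hR.le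
  have hri : ∀ x ∈ Metric.closedBall (0:E) R, ret x = x := by
    intro x hx
    rw [mem_closedBall_zero_iff] at hx
    simp only [ret, max_eq_left hx, div_self hR.ne', one_smul]
  obtain ⟨x, hx⟩ := fixed_point_normed (h := fun x => h (ret x))
    (hc.comp_continuous hrc hrm) (fun x => hm _ (hrm x))
  have hxm : x ∈ Metric.closedBall (0:E) R := by
    rw [mem_closedBall_zero_iff, ← hx]
    exact hm _ (hrm x)
  exact ⟨x, hxm, by rw [← hri x hxm]; simpa [hri x hxm] using hx⟩

end Brouwer

/-- Persistence of transversal intersections (finite-dimensional case, via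
Brouwer's fixed point theorem): the perturbed graphs intersect. -/
theorem stmt10 {X₁ X₂ : Type*}
    [NormedAddCommGroup X₁] [NormedSpace ℝ X₁] [FiniteDimensional ℝ X₁]
    [NormedAddCommGroup X₂] [NormedSpace ℝ X₂] [CompleteSpace X₂]
    (r c : ℝ) (hr : 0 < r) (hc0 : 0 < c) (hc1 : c < 1) (z : X₁ × X₂)
    (θ tθ : X₁ → X₂) (σ tσ : X₂ → X₁)
    (hθ0 : θ 0 = 0) (hσ0 : σ 0 = 0)
    (hθLip : ∀ y₁ ∈ Metric.ball (0 : X₁) r, ∀ y₂ ∈ Metric.ball (0 : X₁) r,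
      ‖θ y₁ - θ y₂‖ ≤ c * ‖y₁ - y₂‖)
    (hσLip : ∀ x₁ ∈ Metric.ball (0 : X₂) r, ∀ x₂ ∈ Metric.ball (0 : X₂) r,
      ‖σ x₁ - σ x₂‖ ≤ c * ‖x₁ - x₂‖)
    (htθcont : ContinuousOn tθ (Metric.ball (0 : X₁) r))
    (htσcont : ContinuousOn tσ (Metric.ball (0 : X₂) r))
    (hθclose : ∀ y ∈ Metric.ball (0 : X₁) r, ‖θ y - tθ y‖ ≤ (1 - c) * r / 2)
    (hσclose : ∀ x ∈ Metric.ball (0 : X₂) r, ‖σ x - tσ x‖ ≤ (1 - c) * r / 2) :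
    ({p : X₁ × X₂ | ∃ y ∈ Metric.ball (0 : X₁) r, p = z + (y, tθ y)} ∩
      {p : X₁ × X₂ | ∃ x ∈ Metric.ball (0 : X₂) r, p = z + (tσ x, x)}).Nonempty := by
  have hmid : ∀ y : X₁, ‖y‖ ≤ r / 2 → ‖tθ y‖ ≤ r / 2 := by
    intro y hy
    have hyb : y ∈ Metric.ball (0 : X₁) r := by rw [mem_ball_zero_iff]; linarith
    have h1 := hθLip y hyb 0 (Metric.mem_ball_self hr)
    rw [hθ0, sub_zero, sub_zero] at h1
    have h2 := hθclose y hyb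
    have h3 := norm_sub_le (θ y) (θ y - tθ y)
    rw [sub_sub_cancel] at h3
    nlinarith
  have hmid2 : ∀ x : X₂, ‖x‖ ≤ r / 2 → ‖tσ x‖ ≤ r / 2 := by
    intro x hx
    have hxb : x ∈ Metric.ball (0 : X₂) r := by rw [mem_ball_zero_iff]; linarith
    have h1 := hσLip x hxb 0 (Metric.mem_ball_self hr)
    rw [hσ0, sub_zero, sub_zero] at h1
    have h2 := hσclose x hxb
    have h3 := norm_sub_le (σ x) (σ x - tσ x)
    rw [sub_sub_cancel] at h3
    nlinarith
  have hsub : Metric.closedBall (0 : X₁) (r / 2) ⊆ Metric.ball 0 r :=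
    Metric.closedBall_subset_ball (by linarith)
  obtain ⟨y, hy, hfix⟩ := brouwer_closedBall (R := r / 2) (by linarith)
    (h := fun y => tσ (tθ y))
    (htσcont.comp (htθcont.mono hsub) (fun y hy => by
      have := hmid y (by simpa using hy)
      rw [mem_ball_zero_iff]; linarith))
    (fun y hy => hmid2 _ (hmid y (by simpa using hy)))
  have hθy := hmid y (by simpa using hy)
  refine ⟨z + (y, tθ y), ⟨y, hsub hy, rfl⟩, tθ y, ?_, ?_⟩
  · rw [mem_ball_zero_iff]; linarith
  · have hfix' : tσ (tθ y) = y := hfix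
    rw [hfix']
end

section
/- Let $X_u, X_s$ be Banach spaces, $X = X_u \times X_s$ with norm $\|(x_u,x_s)\| = \max\{\|x_u\|,\|x_s\|\}$, and $\pi_u : X \to X_u$ the projection. Let $V_u \subseteq X_u$ be an open neighborhood of $0$, $\theta : V_u \to X_s$ a Lipschitz map with $\theta(0) = 0$, and define $\varphi : V_u \to X$ by $\varphi(\xi) = (\xi, \theta(\xi))$. Let $\psi : V_u \to X$ satisfy $\max\{\sup_{\xi \in V_u}\|\varphi(\xi)-\psi(\xi)\|,\ \mathrm{Lip}(\varphi - \psi)\} \le \varepsilon$ for some $\varepsilon < 1/2$. Then: (a) the set $W_u = \pi_u(\psi(V_u))$ is open in $X_u$ and contains $\pi_u(\psi(0))$; (b) if $B_r^{X_u}(0) \subseteq V_u$ and $r_0 = r - \varepsilon > 0$, then $B_{r_0}^{X_u}(0) \subseteq V_u \cap W_u$; (c) there exists $\tilde\theta : W_u \to X_s$ such that $\psi(V_u) = \{(\eta, \tilde\theta(\eta)) : \eta \in W_u\}$, with $\mathrm{Lip}(\tilde\theta) \le (\mathrm{Lip}(\theta) + \varepsilon)/(1-\varepsilon)$ and $\sup_{\eta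 \in V_u \cap W_u}\|\tilde\theta(\eta) - \theta(\eta)\| \le (1 + \mathrm{Lip}(\theta))\varepsilon$. -/
theorem stmt14_aux {E : Type*} [NormedAddCommGroup E] [CompleteSpace E]
    (V : Set E) (f : E → E) (ε : ℝ) (hε0 : 0 ≤ ε) (hε : ε < 1 / 2)
    (hL : ∀ x ∈ V, ∀ y ∈ V, ‖(x - f x) - (y - f y)‖ ≤ ε * ‖x - y‖)
    (c η : E) (r : ℝ) (hr : 0 ≤ r) (hV : Metric.closedBall c r ⊆ V)
    (hS : ∀ x ∈ Metric.closedBall c r, η + (x - f x) ∈ Metric.closedBall c r) :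
    η ∈ f '' V := by
  have hm : Set.MapsTo (fun x => η + (x - f x)) (Metric.closedBall c r)
      (Metric.closedBall c r) := hS
  have hc : ContractingWith (NNReal.mk ε hε0) (hm.restrict _ _ _) := by
    constructor
    · apply NNReal.coe_lt_coe.mp
      show ε < 1
      linarith
    · apply LipschitzWith.of_dist_le_mul
      rintro ⟨x, hx⟩ ⟨y, hy⟩
      have h := hL x (hV hx) y (hV hy)
      rw [Subtype.dist_eq, Subtype.dist_eq]
      show dist (η + (x - f x)) (η + (y - f y)) ≤ ε * dist x y
      rw [dist_add_left, dist_eq_norm, dist_eq_norm]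
      exact h
  obtain ⟨y, hy, hfix, -⟩ := ContractingWith.exists_fixedPoint'
    (Metric.isClosed_closedBall.isComplete) hm hc (Metric.mem_closedBall_self hr)
    (edist_ne_top _ _)
  refine ⟨y, hV hy, ?_⟩
  have h : η + (y - f y) = y := hfix
  have h2 : η - f y = 0 := by
    have : η - f y = (η + (y - f y)) - y := by abel
    rw [this, h, sub_self]
  exact (sub_eq_zero.mp h2).symm

/-- Perturbation of Lipschitz graphs: if `ψ` is `ε`-Lipschitz close to the graph
map `φ(ξ) = (ξ, θ(ξ))` on `V_u` with `ε < 1/2`, then `ψ(V_u)` is again a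
Lipschitz graph over the open set `W_u = π_u(ψ(V_u))`. -/
theorem stmt14 {Xu Xs : Type*}
    [NormedAddCommGroup Xu] [NormedSpace ℝ Xu] [CompleteSpace Xu]
    [NormedAddCommGroup Xs] [NormedSpace ℝ Xs] [CompleteSpace Xs]
    (Vu : Set Xu) (hVu : IsOpen Vu) (h0Vu : (0 : Xu) ∈ Vu)
    (θ : Xu → Xs) (cθ : ℝ) (hcθ : 0 ≤ cθ) (hθ0 : θ 0 = 0)
    (hθLip : ∀ ξ₁ ∈ Vu, ∀ ξ₂ ∈ Vu, ‖θ ξ₁ - θ ξ₂‖ ≤ cθ * ‖ξ₁ - ξ₂‖)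
    (ψ : Xu → Xu × Xs) (ε : ℝ) (hε0 : 0 ≤ ε) (hε : ε < 1 / 2)
    (hclose : ∀ ξ ∈ Vu, ‖(ξ, θ ξ) - ψ ξ‖ ≤ ε)
    (hcloseLip : ∀ ξ₁ ∈ Vu, ∀ ξ₂ ∈ Vu,
      ‖((ξ₁, θ ξ₁) - ψ ξ₁) - ((ξ₂, θ ξ₂) - ψ ξ₂)‖ ≤ ε * ‖ξ₁ - ξ₂‖)
    (Wu : Set Xu) (hWu : Wu = (fun ξ => (ψ ξ).1) '' Vu) :
    (IsOpen Wu ∧ (ψ 0).1 ∈ Wu) ∧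
    (∀ R : ℝ, Metric.ball (0 : Xu) R ⊆ Vu → 0 < R - ε →
      Metric.ball (0 : Xu) (R - ε) ⊆ Vu ∩ Wu) ∧
    (∃ tθ : Xu → Xs,
      ψ '' Vu = (fun η => (η, tθ η)) '' Wu ∧
      (∀ η₁ ∈ Wu, ∀ η₂ ∈ Wu, ‖tθ η₁ - tθ η₂‖ ≤ (cθ + ε) / (1 - ε) * ‖η₁ - η₂‖) ∧
      (∀ η ∈ Vu ∩ Wu, ‖tθ η - θ η‖ ≤ (1 + cθ) * ε)) := by
  have hc1 : ∀ ξ ∈ Vu, ‖ξ - (ψ ξ).1‖ ≤ ε := fun ξ h =>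
    (norm_fst_le ((ξ, θ ξ) - ψ ξ)).trans (hclose ξ h)
  have hc2 : ∀ ξ ∈ Vu, ‖θ ξ - (ψ ξ).2‖ ≤ ε := fun ξ h =>
    (norm_snd_le ((ξ, θ ξ) - ψ ξ)).trans (hclose ξ h)
  have hL1 : ∀ x ∈ Vu, ∀ y ∈ Vu, ‖(x - (ψ x).1) - (y - (ψ y).1)‖ ≤ ε * ‖x - y‖ :=
    fun x hx y hy => (norm_fst_le (((x, θ x) - ψ x) - ((y, θ y) - ψ y))).trans
      (hcloseLip x hx y hy)
  have hL2 : ∀ x ∈ Vu, ∀ y ∈ Vu, ‖(θ x - (ψ x).2) - (θ y - (ψ y).2)‖ ≤ ε * ‖x - y‖ :=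
    fun x hx y hy => (norm_snd_le (((x, θ x) - ψ x) - ((y, θ y) - ψ y))).trans
      (hcloseLip x hx y hy)
  have hexp : ∀ x ∈ Vu, ∀ y ∈ Vu, (1 - ε) * ‖x - y‖ ≤ ‖(ψ x).1 - (ψ y).1‖ := by
    intro x hx y hy
    have h1 := hL1 x hx y hy
    have h2 : ‖x - y‖ ≤ ‖(x - (ψ x).1) - (y - (ψ y).1)‖ + ‖(ψ x).1 - (ψ y).1‖ := by
      refine le_trans (le_of_eq ?_) (norm_add_le _ _)
      congr 1
      abel
    linarith
  subst hWu
  refine ⟨⟨?_, ⟨0, h0Vu, rfl⟩⟩, ?_, ?_⟩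
  · rw [Metric.isOpen_iff]
    rintro _ ⟨x, hx, rfl⟩
    obtain ⟨r, hr, hrV⟩ := Metric.nhds_basis_closedBall.mem_iff.mp (hVu.mem_nhds hx)
    refine ⟨(1 - ε) * r, mul_pos (by linarith) hr, ?_⟩
    intro η hη
    refine stmt14_aux Vu (fun ξ => (ψ ξ).1) ε hε0 hε hL1 x η r hr.le hrV ?_
    intro z hz
    have h1 := hL1 z (hrV hz) x hx
    rw [Metric.mem_ball, dist_eq_norm] at hη
    rw [Metric.mem_closedBall, dist_eq_norm] at hz ⊢
    have h2 : ‖η + (z - (ψ z).1) - x‖ ≤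
        ‖η - (ψ x).1‖ + ‖(z - (ψ z).1) - (x - (ψ x).1)‖ := by
      refine le_trans (le_of_eq ?_) (norm_add_le _ _)
      congr 1
      abel
    have h3 := mul_le_mul_of_nonneg_left hz hε0
    have h4 : ‖η - (ψ x).1‖ < (1 - ε) * r := hη
    show ‖η + (z - (ψ z).1) - x‖ ≤ r
    linarith
  · intro R hR hRε η hη
    rw [Metric.mem_ball, dist_zero_right] at hη
    have hsub : Metric.closedBall η ε ⊆ Vu := by
      intro z hz
      apply hR
      rw [Metric.mem_closedBall, dist_eq_norm] at hz
      rw [Metric.mem_ball, dist_zero_right]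
      have : ‖z‖ ≤ ‖z - η‖ + ‖η‖ := by
        simpa using norm_add_le (z - η) η
      linarith
    refine ⟨hsub (Metric.mem_closedBall_self hε0), ?_⟩
    refine stmt14_aux Vu (fun ξ => (ψ ξ).1) ε hε0 hε hL1 η η ε hε0 hsub ?_
    intro z hz
    rw [Metric.mem_closedBall, dist_eq_norm, add_sub_cancel_left]
    exact hc1 z (hsub hz)
  · have hinj : Set.InjOn (fun ξ => (ψ ξ).1) Vu := by
      intro x hx y hy hxy
      have h := hexp x hx y hy
      have hxy' : (ψ x).1 - (ψ y).1 = 0 := sub_eq_zero.mpr hxy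
      rw [hxy', norm_zero] at h
      have h1 : ‖x - y‖ ≤ 0 := by
        by_contra! hc
        have := mul_pos (show 0 < 1 - ε by linarith) hc
        linarith
      exact sub_eq_zero.mp (norm_le_zero_iff.mp h1)
    have hex : ∀ x ∈ Vu, Function.invFunOn (fun ξ => (ψ ξ).1) Vu (ψ x).1 = x :=
      fun x hx => hinj.leftInvOn_invFunOn hx
    refine ⟨fun η => (ψ (Function.invFunOn (fun ξ => (ψ ξ).1) Vu η)).2, ?_, ?_, ?_⟩
    · rw [Set.image_image]
      apply Set.image_congr
      intro x hx
      simp only [hex x hx]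
    · rintro _ ⟨x, hx, rfl⟩ _ ⟨y, hy, rfl⟩
      simp only [hex x hx, hex y hy]
      have h1 := hL2 x hx y hy
      have h2 := hθLip x hx y hy
      have h3 := hexp x hx y hy
      have h4 : ‖(ψ x).2 - (ψ y).2‖ ≤
          ‖θ x - θ y‖ + ‖(θ x - (ψ x).2) - (θ y - (ψ y).2)‖ := by
        refine le_trans (le_of_eq ?_) (norm_sub_le _ _)
        congr 1
        abel
      have hpos : 0 < 1 - ε := by linarith
      rw [div_mul_eq_mul_div, le_div_iff₀ hpos]
      have h5 := mul_le_mul_of_nonneg_left h3 (show 0 ≤ cθ + ε by linarith)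
      have h6 : ‖(ψ x).2 - (ψ y).2‖ ≤ (cθ + ε) * ‖x - y‖ := by linarith
      have h7 := mul_le_mul_of_nonneg_right h6 hpos.le
      linarith
    · rintro _ ⟨hxV, x, hx, rfl⟩
      simp only [hex x hx] at hxV ⊢
      have h1 := hθLip x hx _ hxV
      have h2 := hc2 x hx
      have h3 := mul_le_mul_of_nonneg_left (hc1 x hx) hcθ
      have h4 : ‖(ψ x).2 - θ (ψ x).1‖ ≤ ‖θ x - θ (ψ x).1‖ + ‖θ x - (ψ x).2‖ := by
        refine le_trans (le_of_eq ?_) (norm_sub_le _ _)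
        congr 1
        abel
      linarith
end

section
/- Let $\Omega$ be a nonempty bounded open subset of $\mathbb{R}^n$ with Lebesgue measure, let $1 \le p < \infty$, and let $f : \mathbb{R} \to \mathbb{R}$ be differentiable and globally Lipschitz continuous. Consider the Nemytskii operator $f^e : L^p(\Omega) \to L^p(\Omega)$ defined by $f^e(u)(x) = f(u(x))$ for a.e. $x \in \Omega$. If $f^e$ is Fréchet differentiable at a point $u_0 \in L^p(\Omega)$, then for every $h \in L^p(\Omega)$ the derivative acts as multiplication by $f' \circ u_0$: $[Df^e(u_0)h](x) = f'(u_0(x))\, h(x)$ for a.e. $x \in \Omega$. -/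
open MeasureTheory ENNReal

/-- If the Nemytskii operator of a differentiable, globally Lipschitz
`f : ℝ → ℝ` on `L^p(Ω)` is Fréchet differentiable at `u₀`, then its derivative
acts as multiplication by `f' ∘ u₀`. -/
theorem stmt17 {n : ℕ} (Ω : Set (Fin n → ℝ)) (hΩo : IsOpen Ω) (hΩne : Ω.Nonempty)
    (hΩb : Bornology.IsBounded Ω)
    (p : ℝ≥0∞) [Fact (1 ≤ p)] (hp : p ≠ ⊤)
    (f : ℝ → ℝ) (hdiff : Differentiable ℝ f) (K : NNReal) (hK : LipschitzWith K f)
    (fe : Lp ℝ p (volume.restrict Ω) → Lp ℝ p (volume.restrict Ω))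
    (hfe : ∀ u : Lp ℝ p (volume.restrict Ω),
      (fe u : (Fin n → ℝ) → ℝ) =ᵐ[volume.restrict Ω] fun x => f (u x))
    (u₀ : Lp ℝ p (volume.restrict Ω))
    (D : Lp ℝ p (volume.restrict Ω) →L[ℝ] Lp ℝ p (volume.restrict Ω))
    (hD : HasFDerivAt fe D u₀) :
    ∀ h : Lp ℝ p (volume.restrict Ω),
      (D h : (Fin n → ℝ) → ℝ) =ᵐ[volume.restrict Ω]
        fun x => deriv f (u₀ x) * h x := by
  intro h
  have hc : Filter.Tendsto (fun k : ℕ => ‖(k : ℝ)‖) Filter.atTop Filter.atTop := by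
    simpa using (tendsto_natCast_atTop_atTop (R := ℝ))
  have h1 := hD.lim h hc
  obtain ⟨ns, hns, hae⟩ := (tendstoInMeasure_of_tendsto_Lp h1).exists_seq_tendsto_ae
  have hall : ∀ᵐ x ∂(volume.restrict Ω), ∀ k : ℕ,
      ((k : ℝ) • (fe (u₀ + (k : ℝ)⁻¹ • h) - fe u₀) : Lp ℝ p (volume.restrict Ω)) x
        = (k : ℝ) • (f (u₀ x + (k : ℝ)⁻¹ • h x) - f (u₀ x)) := by
    rw [ae_all_iff]
    intro k
    filter_upwards [Lp.coeFn_smul (k : ℝ) (fe (u₀ + (k : ℝ)⁻¹ • h) - fe u₀),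
      Lp.coeFn_sub (fe (u₀ + (k : ℝ)⁻¹ • h)) (fe u₀), hfe (u₀ + (k : ℝ)⁻¹ • h), hfe u₀,
      Lp.coeFn_add u₀ ((k : ℝ)⁻¹ • h), Lp.coeFn_smul (k : ℝ)⁻¹ h] with x a1 a2 a3 a4 a5 a6
    rw [a1, Pi.smul_apply, a2, Pi.sub_apply, a3, a4, a5, Pi.add_apply, a6, Pi.smul_apply]
  filter_upwards [hae, hall] with x hx hk
  have h2 := ((hdiff (u₀ x)).hasDerivAt.hasFDerivAt.lim (h x) hc).comp hns.tendsto_atTop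
  have h3 := tendsto_nhds_unique (hx.congr fun i => hk (ns i)) h2
  rw [h3]
  simp [mul_comm]
end
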